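/- Let n be a positive odd integer and d a positive integer with gcd(n,d)=1. Let r be an integer with n−dn+d ≤ r ≤ n and n ≡ r (mod d). Then, modulo Φ_n(−q)^3 Φ_n(q)^2, one has Σ_{k=0}^{(n−r)/d} (−1)^k · (1+q^{2dk+r})(q^{2r};q^{2d})_k^2 / ((1+q^r)(q^{2d};q^{2d})_k^2) · q^{dk^2+k(d−r)} ≡ (−1)^{(n−r)/d} · ([n]_{q^2}/[r]_{q^2}) · q^{(n−r)(n+r−d)/d} · Σ_{k=0}^{(n−r)/d} (q^{2r};q^{2d})_k (q^r;q^{2d})_k / ((q^{2d};q^{2d})_k (q^{2d+r};q^{2d})_k) · q^{2k(d−r)}. -/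

import Mathlib

open Finset Polynomial

/-- The q-shifted factorial `(x; q)_k = ∏_{j=0}^{k-1} (1 - x q^j)`. -/
noncomputable def qPoch (x q : RatFunc ℚ) (k : ℕ) : RatFunc ℚ :=
  ∏ j ∈ Finset.range k, (1 - x * q ^ j)

/-- The q-integer `[m]_q = (1 - q^m)/(1 - q)` (with integer `m`). -/
noncomputable def qInt (q : RatFunc ℚ) (m : ℤ) : RatFunc ℚ :=
  (1 - q ^ m) / (1 - q)


noncomputable def qp {K : Type*} [CommRing K] (x q : K) (k : ℕ) : K :=
  ∏ j ∈ Finset.range k, (1 - x * q ^ j)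

section field
variable {K : Type*} [Field K]

lemma qp_zero (x q : K) : qp x q 0 = 1 := by simp [qp]

lemma qp_succ (x q : K) (k : ℕ) : qp x q (k+1) = qp x q k * (1 - x * q ^ k) := by
  simp [qp, Finset.prod_range_succ]

lemma qp_succ' (x q : K) (k : ℕ) : qp x q (k+1) = (1 - x) * qp (x * q) q k := by
  simp only [qp, Finset.prod_range_succ']
  rw [mul_comm]
  simp only [pow_zero, mul_one, pow_succ']
  simp only [mul_assoc]

lemma qp_add (x q : K) (m k : ℕ) : qp x q (m+k) = qp x q m * qp (x * q ^ m) q k := by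
  simp only [qp, Finset.prod_range_add]
  simp only [pow_add, mul_assoc]

lemma qp_ne (x q : K) (k : ℕ) (h : ∀ j < k, x * q ^ j ≠ 1) : qp x q k ≠ 0 := by
  simp only [qp]
  rw [Finset.prod_ne_zero_iff]
  intro j hj
  exact sub_ne_zero.2 (h j (by simpa using hj)).symm

lemma qp_inv_zero (p : K) (hp : p ≠ 0) (N : ℕ) : qp (p ^ N)⁻¹ p (N+1) = 0 := by
  rw [qp_succ, inv_mul_cancel₀ (pow_ne_zero _ hp)]; simp

/-- Summand of the terminating very-well-poised sum. -/
noncomputable def fB (a d p : K) (N k : ℕ) : K :=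
  (1 - a * p ^ k * p ^ k) * qp a p k * qp d p k * qp (p ^ N)⁻¹ p k /
    (qp p p k * qp (a * p / d) p k * qp (a * p ^ (N+1)) p k) *
    ((-1) ^ k * p ^ (k.choose 2) * (a * p ^ (N+1) / d) ^ k)

lemma fB_partial (a d p : K) (hp : p ≠ 0) (hd : d ≠ 0) (h1 : ∀ j : ℕ, p * p ^ j ≠ 1)
    (h2 : ∀ j : ℕ, a * p ^ j ≠ 1) (N : ℕ) (h3 : ∀ j < N+1, a * p / d * p ^ j ≠ 1) (m : ℕ)
    (hm : m ≤ N+1) :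
    ∑ k ∈ range (m+1), ((1 - a * p ^ (N+1) / d) / (1 - a * p ^ (N+1)) * fB a d p (N+1) k
      - fB a d p N k) =
    qp a p m * qp d p m * ((-1) ^ m * p ^ (m.choose 2) * (a * p ^ (N+1) / d) ^ m) /
      (qp p p m * qp (a * p / d) p m * qp (a * p ^ (N+2)) p m) * qp (p ^ N)⁻¹ p m *
      (1 - a * p ^ m) * (1 - d * p ^ m) * (-(a * p ^ (N+1) * p ^ m / (d * (1 - a * p ^ (N+1))))) := by
  have hN : (1 - a * p ^ (N+1)) ≠ 0 := sub_ne_zero.2 (h2 (N+1)).symm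
  induction m with
  | zero =>
    simp [fB, qp_zero]
    field_simp
    ring
  | succ m ih =>
    rw [Finset.sum_range_succ, ih (by omega)]
    have e1 : qp (p ^ (N+1))⁻¹ p (m+1) = (1 - (p ^ (N+1))⁻¹) * qp (p ^ N)⁻¹ p m := by
      rw [qp_succ']; congr 2; field_simp; ring
    have e2 : qp (a * p ^ (N+1)) p (m+1) = (1 - a * p ^ (N+1)) * qp (a * p ^ (N+2)) p m := by
      rw [qp_succ']; congr 2; ring
    have e3 : (m+1).choose 2 = m + m.choose 2 := by
      rw [Nat.choose_succ_succ']; simp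
    simp only [fB]
    rw [e1, e2, e3]
    simp only [qp_succ]
    have n1 : qp p p m ≠ 0 := qp_ne _ _ _ (fun j _ => h1 j)
    have n2 : (1 - p * p ^ m) ≠ 0 := sub_ne_zero.2 (h1 m).symm
    have n3 : qp (a * p / d) p m ≠ 0 := qp_ne _ _ _ (fun j hj => h3 j (by omega))
    have n4 : (1 - a * p / d * p ^ m) ≠ 0 := sub_ne_zero.2 (h3 m (by omega)).symm
    have n5 : qp (a * p ^ (N+2)) p m ≠ 0 := qp_ne _ _ _ (fun j hj => by
      rw [mul_assoc, ← pow_add]; exact h2 _)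
    have n6 : (1 - a * p ^ (N+2) * p ^ m) ≠ 0 := sub_ne_zero.2 (by
      rw [mul_assoc, ← pow_add]; exact (h2 _).symm)
    have n7 : (1 - a * p ^ (N+1) * p ^ m) ≠ 0 := sub_ne_zero.2 (by
      rw [mul_assoc, ← pow_add]; exact (h2 _).symm)
    have n4' : d - a * p * p ^ m ≠ 0 := by
      intro h; apply n4; field_simp; linear_combination h
    have e4 : (1 - a * p / d * p ^ m) = (d - a * p * p ^ m) / d := by field_simp
    rw [e4]
    generalize qp p p m = A1 at *
    generalize qp (a * p / d) p m = A2 at *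
    generalize qp (a * p ^ (N+2)) p m = A3 at *
    generalize qp (p ^ N)⁻¹ p m = A4 at *
    generalize qp a p m = A5 at *
    generalize qp d p m = A6 at *
    have hpm : p ^ m ≠ 0 := pow_ne_zero _ hp
    have hpN : p ^ N ≠ 0 := pow_ne_zero _ hp
    have z : (a * p ^ (N+1+1) / d) ^ (m+1) = (a * p ^ (N+1) / d) ^ m * p ^ m * (a * p ^ (N+2) / d) := by
      rw [pow_succ]; congr 1; rw [← mul_pow]; congr 1; ring
    rw [z, pow_succ (a * p ^ (N+1) / d) m]
    generalize (a * p ^ (N+1) / d) ^ m = Z at *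
    obtain ⟨D1, hD1⟩ : ∃ D, D = 1 - p * p ^ m := ⟨_, rfl⟩
    obtain ⟨D2, hD2⟩ : ∃ D, D = d - a * p * p ^ m := ⟨_, rfl⟩
    obtain ⟨D3, hD3⟩ : ∃ D, D = 1 - a * p ^ (N+2) * p ^ m := ⟨_, rfl⟩
    obtain ⟨D5, hD5⟩ : ∃ D, D = 1 - a * p ^ (N+1) := ⟨_, rfl⟩
    rw [← hD1] at n2
    rw [← hD2] at n4'
    rw [← hD3] at n6
    rw [← hD5] at hN
    rw [← hD1, ← hD2, ← hD5, show N + 1 + 1 = N + 2 from rfl, ← hD3]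
    clear ih e1 e2 e4 z n7 n4
    rw [pow_succ (-1 : K) m, pow_add p m (m.choose 2)]
    generalize p ^ (m.choose 2) = W at *
    generalize (-1 : K) ^ m = V at *
    rw [show p ^ (N+2) = p ^ N * p * p by ring] at *
    rw [show p ^ (N+1) = p ^ N * p by ring] at *
    rw [show p ^ (m+1) = p ^ m * p by ring] at *
    generalize p ^ m = P at *
    generalize p ^ N = Q at *
    field_simp
    subst hD1 hD2 hD3 hD5
    ring

lemma fB_sum (a d p : K) (hp : p ≠ 0) (hd : d ≠ 0) (h1 : ∀ j : ℕ, p * p ^ j ≠ 1)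
    (h2 : ∀ j : ℕ, a * p ^ j ≠ 1) (N : ℕ) (h3 : ∀ j < N, a * p / d * p ^ j ≠ 1) :
    ∑ k ∈ range (N+1), fB a d p N k = qp a p (N+1) / qp (a * p / d) p N := by
  induction N with
  | zero => simp [fB, qp_zero, qp_succ]
  | succ N ih =>
    have h := fB_partial a d p hp hd h1 h2 N h3 (N+1) le_rfl
    rw [qp_inv_zero p hp] at h
    rw [Finset.sum_sub_distrib, ← Finset.mul_sum, Finset.sum_range_succ (fB a d p N),
      ih (fun j hj => h3 j (by omega))] at h
    have : fB a d p N (N+1) = 0 := by simp [fB, qp_inv_zero p hp]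
    rw [this] at h
    have hN : (1 - a * p ^ (N+1)) ≠ 0 := sub_ne_zero.2 (h2 (N+1)).symm
    have n3 : qp (a * p / d) p N ≠ 0 := qp_ne _ _ _ (fun j hj => h3 j (by omega))
    have n4 : (1 - a * p / d * p ^ N) ≠ 0 := sub_ne_zero.2 (h3 N (by omega)).symm
    rw [qp_succ a p (N+1), qp_succ (a * p / d) p N, eq_div_iff (mul_ne_zero n3 n4)]
    have e : 1 - a * p ^ (N+1) / d = 1 - a * p / d * p ^ N := by ring
    rw [e] at h
    simp only [mul_zero, zero_mul, add_zero] at h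
    rw [sub_eq_zero] at h
    generalize ∑ k ∈ range (N + 1 + 1), fB a d p (N + 1) k = S at *
    generalize 1 - a * p / d * p ^ N = D1 at *
    generalize 1 - a * p ^ (N+1) = D2 at *
    field_simp at h
    linear_combination h

/-- Summand of the special q-Saalschuetz sum. -/
noncomputable def tA (a s p : K) (k j : ℕ) : K :=
  qp (p ^ k)⁻¹ p j * qp (a * p ^ k) p j * p ^ j / (qp p p j * qp a p j * (1 - s * p ^ j))

lemma tA_partial (a s p : K) (hp : p ≠ 0) (h1 : ∀ j : ℕ, p * p ^ j ≠ 1)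
    (h2 : ∀ j : ℕ, a * p ^ j ≠ 1) (h4 : ∀ j : ℕ, s * p ^ j ≠ 1) (k : ℕ)
    (h5 : s - a * p ^ k ≠ 0) (m : ℕ) :
    ∑ j ∈ range (m+1), ((1 - s * p ^ (k+1)) * (1 - a * p ^ k) /
      ((s - a * p ^ k) * (1 - p * p ^ k)) * tA a s p (k+1) j - tA a s p k j) =
    qp (p ^ k)⁻¹ p m * qp (a * p ^ (k+1)) p m / (qp p p m * qp a p m) *
      ((1 - a * p * p ^ k * p ^ k) / ((s - a * p ^ k) * (1 - p * p ^ k))) := by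
  have hN : (1 - p * p ^ k) ≠ 0 := sub_ne_zero.2 (h1 k).symm
  induction m with
  | zero =>
    have := h4 0
    have : 1 - s ≠ 0 := sub_ne_zero.2 (by simpa using this.symm)
    simp only [tA, qp_zero, zero_add, Finset.sum_range_one, pow_zero, mul_one, one_mul, div_one]
    obtain ⟨D1, hD1⟩ : ∃ D, D = 1 - p * p ^ k := ⟨_, rfl⟩
    obtain ⟨D2, hD2⟩ : ∃ D, D = s - a * p ^ k := ⟨_, rfl⟩
    obtain ⟨D3, hD3⟩ : ∃ D, D = 1 - s := ⟨_, rfl⟩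
    rw [← hD1] at hN
    rw [← hD2] at h5
    rw [← hD3] at this
    rw [← hD1, ← hD2, ← hD3]
    field_simp
    subst hD1 hD2 hD3
    ring
  | succ m ih =>
    rw [Finset.sum_range_succ, ih]
    have e1 : qp (p ^ (k+1))⁻¹ p (m+1) = (1 - (p ^ (k+1))⁻¹) * qp (p ^ k)⁻¹ p m := by
      rw [qp_succ']; congr 2; field_simp; ring
    have e2 : qp (a * p ^ k) p (m+1) = (1 - a * p ^ k) * qp (a * p ^ (k+1)) p m := by
      rw [qp_succ']; congr 2; ring
    simp only [tA]
    rw [e1, e2]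
    simp only [qp_succ]
    have n1 : qp p p m ≠ 0 := qp_ne _ _ _ (fun j _ => h1 j)
    have n2 : (1 - p * p ^ m) ≠ 0 := sub_ne_zero.2 (h1 m).symm
    have n3 : qp a p m ≠ 0 := qp_ne _ _ _ (fun j hj => h2 j)
    have n4 : (1 - a * p ^ m) ≠ 0 := sub_ne_zero.2 (h2 m).symm
    have n5 : (1 - s * p ^ (m+1)) ≠ 0 := sub_ne_zero.2 (h4 _).symm
    generalize qp p p m = A1 at *
    generalize qp (p ^ k)⁻¹ p m = A4 at *
    generalize qp a p m = A5 at *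
    generalize qp (a * p ^ (k+1)) p m = A6 at *
    have hpm : p ^ m ≠ 0 := pow_ne_zero _ hp
    have hpN : p ^ k ≠ 0 := pow_ne_zero _ hp
    clear ih e1 e2
    obtain ⟨D1, hD1⟩ : ∃ D, D = 1 - p * p ^ m := ⟨_, rfl⟩
    obtain ⟨D2, hD2⟩ : ∃ D, D = 1 - a * p ^ m := ⟨_, rfl⟩
    obtain ⟨D3, hD3⟩ : ∃ D, D = 1 - s * p ^ (m+1) := ⟨_, rfl⟩
    obtain ⟨D4, hD4⟩ : ∃ D, D = s - a * p ^ k := ⟨_, rfl⟩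
    obtain ⟨D5, hD5⟩ : ∃ D, D = 1 - p * p ^ k := ⟨_, rfl⟩
    rw [← hD1] at n2
    rw [← hD2] at n4
    rw [← hD3] at n5
    rw [← hD4] at h5
    rw [← hD5] at hN
    rw [← hD1, ← hD2, ← hD3, ← hD4, ← hD5]
    rw [show p ^ (k+1) = p ^ k * p by ring] at *
    rw [show p ^ (m+1) = p ^ m * p by ring] at *
    generalize p ^ m = P at *
    generalize p ^ k = Q at *
    field_simp
    subst hD1 hD2 hD3 hD4 hD5
    ring

lemma tA_sum (s p : K) (hp : p ≠ 0) (hs : s ≠ 0) (h1 : ∀ j : ℕ, p * p ^ j ≠ 1)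
    (h2 : ∀ j : ℕ, s ^ 2 * p ^ j ≠ 1) (h4 : ∀ j : ℕ, s * p ^ j ≠ 1) (k : ℕ) :
    ∑ j ∈ range (k+1), tA (s^2) s p k j =
      s ^ k * qp p p k / (qp (s^2) p k * (1 - s * p ^ k)) := by
  induction k with
  | zero => simp [tA, qp_zero]
  | succ k ih =>
    have n5 : (1 - s * p ^ k) ≠ 0 := sub_ne_zero.2 (h4 _).symm
    have h5 : s - s ^ 2 * p ^ k ≠ 0 := by
      have : s - s ^ 2 * p ^ k = s * (1 - s * p ^ k) := by ring
      rw [this]; exact mul_ne_zero hs n5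
    have h := tA_partial (s^2) s p hp h1 h2 h4 k h5 (k+1)
    rw [qp_inv_zero p hp] at h
    rw [Finset.sum_sub_distrib, ← Finset.mul_sum, Finset.sum_range_succ (tA (s^2) s p k),
      ih] at h
    have : tA (s^2) s p k (k+1) = 0 := by simp [tA, qp_inv_zero p hp]
    rw [this] at h
    have hN : (1 - p * p ^ k) ≠ 0 := sub_ne_zero.2 (h1 k).symm
    have n3 : qp (s^2) p k ≠ 0 := qp_ne _ _ _ (fun j hj => h2 j)
    have n4 : (1 - s^2 * p ^ k) ≠ 0 := sub_ne_zero.2 (h2 k).symm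
    have n6 : (1 - s * p ^ (k+1)) ≠ 0 := sub_ne_zero.2 (h4 _).symm
    have e : s - s ^ 2 * p ^ k = s * (1 - s * p ^ k) := by ring
    rw [e] at h
    rw [qp_succ (s^2), qp_succ p, eq_div_iff (mul_ne_zero (mul_ne_zero n3 n4) n6)]
    simp only [mul_zero, zero_mul, add_zero, zero_div] at h
    rw [sub_eq_zero] at h
    rw [pow_succ s k]
    generalize ∑ j ∈ range (k + 1 + 1), tA (s ^ 2) s p (k + 1) j = S at *
    generalize 1 - p * p ^ k = D1 at *
    generalize 1 - s * p ^ k = D2 at *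
    generalize 1 - s^2 * p ^ k = D3 at *
    generalize 1 - s * p ^ (k+1) = D4 at *
    field_simp at h
    linear_combination h

lemma qp_flip (p : K) (hp : p ≠ 0) (j m : ℕ) :
    qp (p ^ (j+m))⁻¹ p j * p ^ ((j+m)*j) * qp p p m = (-1) ^ j * p ^ (j.choose 2) * qp p p (j+m) := by
  induction j with
  | zero => simp [qp_zero]
  | succ j ih =>
    have e1 : qp (p ^ (j+1+m))⁻¹ p (j+1) = (1 - (p ^ (j+1+m))⁻¹) * qp (p ^ (j+m))⁻¹ p j := by
      rw [qp_succ']; congr 2; rw [show j+1+m = (j+m)+1 by ring]; field_simp; ring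
    have e3 : (j+1).choose 2 = j + j.choose 2 := by
      rw [Nat.choose_succ_succ']; simp
    rw [e1, e3, show j+1+m = (j+m)+1 by ring, qp_succ p p (j+m)]
    have e4 : p ^ ((j+m+1)*(j+1)) = p ^ ((j+m)*j) * p ^ (j+m+1) * p ^ j := by ring
    rw [e4]
    have : (1 - (p ^ (j + m + 1))⁻¹) * p ^ (j+m+1) = - (1 - p * p ^ (j+m)) := by
      rw [sub_mul, inv_mul_cancel₀ (pow_ne_zero _ hp)]; ring
    rw [show (1 - (p ^ (j + m + 1))⁻¹) * qp (p ^ (j + m))⁻¹ p j * (p ^ ((j + m) * j) * p ^ (j + m + 1) * p ^ j) * qp p p m = ((1 - (p ^ (j + m + 1))⁻¹) * p ^ (j+m+1)) * p ^ j * (qp (p ^ (j + m))⁻¹ p j * p ^ ((j + m) * j) * qp p p m) by ring, this, ih]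
    ring

end field

section watson
variable {K : Type*} [Field K]

lemma choose_two_add (j m : ℕ) : (j+m).choose 2 = j.choose 2 + m.choose 2 + j*m := by
  induction m with
  | zero => simp
  | succ m ih =>
    rw [← add_assoc, Nat.choose_succ_succ', ih, Nat.choose_succ_succ' m]; simp; ring

lemma two_choose_two (j : ℕ) : 2 * j.choose 2 + j = j * j := by
  induction j with
  | zero => simp
  | succ j ih => rw [Nat.choose_succ_succ']; simp; linarith

lemma fB_shift (a d p s : K) (hp : p ≠ 0) (hd : d ≠ 0) (h1 : ∀ j : ℕ, p * p ^ j ≠ 1)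
    (h2 : ∀ j : ℕ, a * p ^ j ≠ 1)
    (h4 : ∀ j : ℕ, s * p ^ j ≠ 1) (M j m : ℕ)
    (h3 : ∀ i < j + m, a * p / d * p ^ i ≠ 1) :
    fB a d p (j+M) (j+m) * tA a s p (j+m) j =
      (a * p ^ (j+M+1) / d) ^ j * qp a p (2*j) * qp d p j * qp (p ^ (j+M))⁻¹ p j /
        (qp (a * p / d) p j * qp (a * p ^ (j+M+1)) p j * qp p p j * qp a p j * (1 - s * p ^ j)) *
      fB (a * p ^ (2*j)) (d * p ^ j) p M m := by
  have hpj : p ^ j ≠ 0 := pow_ne_zero _ hp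
  have e1 : a * p ^ (2*j) * p ^ (M+1) / (d * p ^ j) = a * p ^ (j+M+1) / d := by
    field_simp; ring
  have e2 : a * p ^ (2*j) * p / (d * p ^ j) = a * p / d * p ^ j := by
    field_simp; ring
  have e3 : a * p ^ (2*j) * p ^ (M+1) = a * p ^ (j+M+1) * p ^ j := by ring
  have e4 : (p ^ M)⁻¹ = (p ^ (j+M))⁻¹ * p ^ j := by
    rw [pow_add]; field_simp
  have e5 : qp a p (2*j) * qp (a * p ^ (2*j)) p m = qp a p (j+m) * qp (a * p ^ (j+m)) p j := by
    rw [← qp_add, ← qp_add]; congr 1; ring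
  have e6 := qp_flip p hp j m
  simp only [fB, tA]
  rw [e1, e2, e3, e4]
  have e7 : (1 - a * p ^ (2 * j) * p ^ m * p ^ m) = 1 - a * p ^ (j+m) * p ^ (j+m) := by ring
  rw [e7, choose_two_add, pow_add (-1 : K) j m, pow_add (a * p ^ (j+M+1) / d) j m, qp_add d,
    qp_add (p ^ (j+M))⁻¹, qp_add (a * p / d), qp_add (a * p ^ (j+M+1)) p j m]
  have n1 : qp p p j ≠ 0 := qp_ne _ _ _ (fun j _ => h1 j)
  have n2 : qp p p m ≠ 0 := qp_ne _ _ _ (fun j _ => h1 j)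
  have n3 : qp p p (j+m) ≠ 0 := qp_ne _ _ _ (fun j _ => h1 j)
  have n4 : qp a p j ≠ 0 := qp_ne _ _ _ (fun j _ => h2 j)
  have n5 : qp (a * p / d) p j ≠ 0 := qp_ne _ _ _ (fun i hi => h3 i (by omega))
  have n6 : qp (a * p / d * p ^ j) p m ≠ 0 := qp_ne _ _ _ (fun i hi => by
    rw [mul_assoc, ← pow_add]; exact h3 _ (by omega))
  have n7 : qp (a * p ^ (j+M+1)) p j ≠ 0 := qp_ne _ _ _ (fun i hi => by
    rw [mul_assoc, ← pow_add]; exact h2 _)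
  have n8 : qp (a * p ^ (j+M+1) * p ^ j) p m ≠ 0 := qp_ne _ _ _ (fun i hi => by
    rw [mul_assoc, mul_assoc, ← pow_add, ← pow_add]; exact h2 _)
  have n9 : (1 - s * p ^ j) ≠ 0 := sub_ne_zero.2 (h4 _).symm
  have e8 : p ^ ((j+m)*j) = p ^ (j.choose 2) * p ^ (j.choose 2) * p ^ j * p ^ (j*m) := by
    rw [← pow_add, ← pow_add, ← pow_add]; congr 1
    have := two_choose_two j
    linear_combination - this
  rw [e8] at e6
  have nc : p ^ (j.choose 2) ≠ 0 := pow_ne_zero _ hp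
  have e9 : ((-1 : K) ^ j) * (-1) ^ j = 1 := by rw [← mul_pow]; simp
  have e10 : qp (p ^ (j+m))⁻¹ p j * (p ^ (j.choose 2) * p ^ j * p ^ (j*m)) * qp p p m * (-1) ^ j =
      qp p p (j+m) := by
    apply mul_left_cancel₀ nc
    linear_combination (-1) ^ j * e6 + p ^ (j.choose 2) * qp p p (j+m) * e9
  rw [pow_add p (j.choose 2 + m.choose 2), pow_add p (j.choose 2)]
  rw [← e10] at n3 ⊢
  generalize 1 - s * p ^ j = D1 at *
  generalize 1 - a * p ^ (j+m) * p ^ (j+m) = D2 at *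
  generalize qp (p ^ (j+m))⁻¹ p j = B1 at *
  generalize qp a p (2*j) = B2 at *
  generalize qp (a * p ^ (2*j)) p m = B3 at *
  generalize qp a p (j+m) = B4 at *
  generalize qp (a * p ^ (j+m)) p j = B5 at *
  generalize qp (a * p ^ (j+M+1) * p ^ j) p m = B6 at *
  generalize qp (a * p ^ (j+M+1)) p j = B7 at *
  generalize qp (a * p / d * p ^ j) p m = B8 at *
  generalize qp (a * p / d) p j = B9 at *
  generalize qp ((p ^ (j+M))⁻¹ * p ^ j) p m = B10 at *
  generalize qp (p ^ (j+M))⁻¹ p j = B11 at *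
  generalize a * p ^ (j+M+1) / d = Z at *
  have nB1 : B1 ≠ 0 := by rintro rfl; simp at n3
  have nV : (-1 : K) ^ j ≠ 0 := pow_ne_zero _ (by simp)
  have nW : p ^ (j*m) ≠ 0 := pow_ne_zero _ hp
  clear e6 e8 e9 e10 e1 e2 e3 e4 e7
  rw [show D2 * B4 * (qp d p j * qp (d * p ^ j) p m) * (B11 * B10) = D2 * B4 * qp d p j * qp (d * p ^ j) p m * B11 * B10 by ring]
  generalize qp d p j = B12 at *
  generalize qp (d * p ^ j) p m = B13 at *
  generalize qp p p j = B14 at *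
  generalize qp p p m = B15 at *
  generalize qp a p j = B16 at *
  generalize (-1 : K) ^ j = V at *
  generalize (-1 : K) ^ m = V' at *
  generalize p ^ (j.choose 2) = W1 at *
  generalize p ^ (m.choose 2) = W2 at *
  generalize p ^ (j*m) = W3 at *
  generalize p ^ j = W4 at *
  generalize Z ^ j = Z1 at *
  generalize Z ^ m = Z2 at *
  field_simp
  linear_combination -(D2*B12*B13*B11*B10*V'*W2*Z1*Z2) * e5

lemma sum_triangle (F : ℕ → ℕ → K) (N : ℕ) :
    ∑ k ∈ range (N+1), ∑ j ∈ range (k+1), F k j =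
    ∑ j ∈ range (N+1), ∑ m ∈ range (N-j+1), F (j+m) j := by
  rw [Finset.sum_sigma', Finset.sum_sigma']
  refine Finset.sum_bij' (fun x _ => ⟨x.2, x.1 - x.2⟩) (fun x _ => ⟨x.1 + x.2, x.1⟩) ?_ ?_ ?_ ?_ ?_
  · rintro ⟨k, j⟩ h; simp at h ⊢; omega
  · rintro ⟨k, j⟩ h; simp at h ⊢; omega
  · rintro ⟨k, j⟩ h; simp at h ⊢; omega
  · rintro ⟨k, j⟩ h; simp at h ⊢
  · rintro ⟨k, j⟩ h; simp at h ⊢; congr; omega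

lemma watson (s d p : K) (hp : p ≠ 0) (hd : d ≠ 0) (hs : s ≠ 0) (h1 : ∀ j : ℕ, p * p ^ j ≠ 1)
    (h2 : ∀ j : ℕ, s ^ 2 * p ^ j ≠ 1) (h4 : ∀ j : ℕ, s * p ^ j ≠ 1) (N : ℕ)
    (h3 : ∀ j < N, s ^ 2 * p / d * p ^ j ≠ 1) :
    ∑ k ∈ range (N+1), (1 + s * p ^ k) * qp (p ^ N)⁻¹ p k * qp d p k /
      (qp (s ^ 2 * p / d) p k * qp (s ^ 2 * p ^ (N+1)) p k) *
      ((-1) ^ k * p ^ (k.choose 2) * (s ^ 2 * p ^ (N+1) / d) ^ k * s ^ k) =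
    (1 - s ^ 2) * qp (s ^ 2 * p) p N / qp (s ^ 2 * p / d) p N *
      ∑ j ∈ range (N+1), qp (p ^ N)⁻¹ p j * qp d p j / (qp p p j * qp (s ^ 2) p j * (1 - s * p ^ j)) *
        (s ^ 2 * p ^ (N+1) / d) ^ j := by
  have L : ∀ k ∈ range (N+1), (1 + s * p ^ k) * qp (p ^ N)⁻¹ p k * qp d p k /
      (qp (s ^ 2 * p / d) p k * qp (s ^ 2 * p ^ (N+1)) p k) *
      ((-1) ^ k * p ^ (k.choose 2) * (s ^ 2 * p ^ (N+1) / d) ^ k * s ^ k) =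
      ∑ j ∈ range (k+1), fB (s^2) d p N k * tA (s^2) s p k j := by
    intro k hk
    have hk' : k ≤ N := by simp at hk; omega
    rw [← Finset.mul_sum, tA_sum s p hp hs h1 h2 h4]
    have n1 : qp p p k ≠ 0 := qp_ne _ _ _ (fun j _ => h1 j)
    have n4 : qp (s^2) p k ≠ 0 := qp_ne _ _ _ (fun j _ => h2 j)
    have n5 : qp (s^2 * p / d) p k ≠ 0 := qp_ne _ _ _ (fun i hi => h3 i (by omega))
    have n7 : qp (s^2 * p ^ (N+1)) p k ≠ 0 := qp_ne _ _ _ (fun i hi => by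
      rw [mul_assoc, ← pow_add]; exact h2 _)
    have n9 : (1 - s * p ^ k) ≠ 0 := sub_ne_zero.2 (h4 _).symm
    simp only [fB]
    have e : 1 - s ^ 2 * p ^ k * p ^ k = (1 + s * p ^ k) * (1 - s * p ^ k) := by ring
    rw [e]
    generalize 1 - s * p ^ k = D1 at *
    generalize qp (s^2 * p ^ (N+1)) p k = D2 at *
    generalize qp (s^2 * p / d) p k = D3 at *
    generalize s^2 * p ^ (N+1) / d = Z at *
    field_simp
  rw [Finset.sum_congr rfl L, sum_triangle, Finset.mul_sum]
  apply Finset.sum_congr rfl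
  intro j hj
  obtain ⟨M, rfl⟩ : ∃ M, N = j + M := ⟨N - j, by simp at hj; omega⟩
  rw [show j + M - j = M by omega]
  rw [Finset.sum_congr rfl (fun m hm => fB_shift (s^2) d p s hp hd h1 h2 h4 M j m (fun i hi => h3 i (by simp at hm; omega))),
    ← Finset.mul_sum, fB_sum]
  · have e2 : s^2 * p ^ (2*j) * p / (d * p ^ j) = s^2 * p / d * p ^ j := by
      have hpj : p ^ j ≠ 0 := pow_ne_zero _ hp
      field_simp; ring
    have e3 : qp (s^2) p (2*j) * qp (s^2 * p ^ (2*j)) p (M+1) =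
        (1 - s^2) * qp (s^2 * p) p (j+M) * qp (s^2 * p ^ (j+M+1)) p j := by
      rw [← qp_add, ← qp_succ', ← qp_add]; congr 1; ring
    rw [e2, qp_add (s^2 * p / d)]
    have n1 : qp p p j ≠ 0 := qp_ne _ _ _ (fun j _ => h1 j)
    have n4 : qp (s^2) p j ≠ 0 := qp_ne _ _ _ (fun j _ => h2 j)
    have n5 : qp (s^2 * p / d) p j ≠ 0 := qp_ne _ _ _ (fun i hi => h3 i (by omega))
    have n6 : qp (s^2 * p / d * p ^ j) p M ≠ 0 := qp_ne _ _ _ (fun i hi => by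
      rw [mul_assoc, ← pow_add]; exact h3 _ (by omega))
    have n7 : qp (s^2 * p ^ (j+M+1)) p j ≠ 0 := qp_ne _ _ _ (fun i hi => by
      rw [mul_assoc, ← pow_add]; exact h2 _)
    have n9 : (1 - s * p ^ j) ≠ 0 := sub_ne_zero.2 (h4 _).symm
    generalize 1 - s * p ^ j = D1 at *
    generalize qp (s^2 * p ^ (j+M+1)) p j = D2 at *
    generalize qp (s^2 * p / d) p j = D3 at *
    generalize qp (s^2 * p / d * p ^ j) p M = D4 at *
    generalize (s^2 * p ^ (j+M+1) / d)^j = Z at *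
    generalize qp (s^2 * p ^ (2*j)) p (M+1) = D5 at *
    generalize qp (s^2 * p) p (j+M) = D6 at *
    generalize qp (p ^ (j+M))⁻¹ p j = D7 at *
    generalize qp (s^2) p (2*j) = D8 at *
    field_simp
    linear_combination Z * qp d p j * D7 * e3
  · exact hp
  · exact mul_ne_zero hd (pow_ne_zero _ hp)
  · exact h1
  · intro i; rw [mul_assoc, ← pow_add]; exact h2 _
  · intro i hi
    have : s^2 * p ^ (2*j) * p / (d * p ^ j) * p ^ i = s^2 * p / d * p ^ (j+i) := by
      have hpj : p ^ j ≠ 0 := pow_ne_zero _ hp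
      rw [pow_add]
      field_simp; ring
    rw [this]; exact h3 _ (by omega)
end watson


section ring
variable {T T' : Type*} [CommRing T] [CommRing T']

def bF (p x : T) (i : ℕ) : T := (1 - p ^ i * x) * (x - p ^ i)
def aF (p s x : T) (i : ℕ) : T := (1 - s ^ 2 * p ^ i * x) * (x - s ^ 2 * p ^ i)
def AA (p s x : T) (k : ℕ) : T := ∏ j ∈ range k, aF p s x j
def BB (p x : T) (N k : ℕ) : T := ∏ j ∈ Ico k N, bF p x (j+1)
def cc (p s s' : T) (k : ℕ) : T := (-1) ^ k * (1 + s * p ^ k) * p ^ (k.choose 2) * (p * s') ^ k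
def SS (p s s' x : T) (N : ℕ) : T := ∑ k ∈ range (N+1), cc p s s' k * AA p s x k * BB p x N k

lemma map_AA (f : T →+* T') (p s x : T) (k : ℕ) : f (AA p s x k) = AA (f p) (f s) (f x) k := by
  simp [AA, aF, map_prod]
lemma map_BB (f : T →+* T') (p x : T) (N k : ℕ) : f (BB p x N k) = BB (f p) (f x) N k := by
  simp [BB, bF, map_prod]
lemma map_SS (f : T →+* T') (p s s' x : T) (N : ℕ) :
    f (SS p s s' x N) = SS (f p) (f s) (f s') (f x) N := by
  simp [SS, cc, map_sum, map_AA, map_BB]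

lemma QQ_cancel (Q Q' : T) (h : Q * Q' = 1) (e f g : ℕ) (hg : g = e + f) : Q ^ e * Q' ^ g = Q' ^ f := by
  rw [hg, pow_add, ← mul_assoc, ← mul_pow, h]; simp

lemma aF_eq (Q Q' x : T) (h : Q * Q' = 1) (k i : ℕ) :
    aF (Q^2) (-Q' ^ (k+i)) x i = Q' ^ (4*k) * bF (Q^2) x k := by
  have e : (-Q' ^ (k+i)) ^ 2 * (Q^2) ^ i = Q' ^ (2*k) := by
    rw [neg_sq, ← pow_mul, ← pow_mul, mul_comm]
    exact QQ_cancel Q Q' h _ _ _ (by ring)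
  have e2 : Q' ^ (2*k) * Q ^ (2*k) = 1 := by rw [← mul_pow, mul_comm, h]; simp
  simp only [aF, bF]
  rw [e, ← pow_mul, show 4*k = 2*k+2*k by ring, pow_add]
  generalize Q' ^ (2*k) = u at *
  generalize Q ^ (2*k) = v at *
  linear_combination (x^2 * u + u - x - x * u * v) * e2

lemma AA_eq (Q Q' x : T) (h : Q * Q' = 1) (k l : ℕ) :
    AA (Q^2) (-Q' ^ (k+l)) x k = Q' ^ (2*k^2+4*k*l+2*k) * BB (Q^2) x (k+l) l := by
  induction k generalizing l with
  | zero => simp [AA, BB]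
  | succ k ih =>
    have e1 : AA (Q^2) (-Q' ^ (k+1+l)) x (k+1) = AA (Q^2) (-Q' ^ (k+(l+1))) x k *
        aF (Q^2) (-Q' ^ (l+1+k)) x k := by
      simp only [AA, prod_range_succ]
      rw [show k+1+l = k+(l+1) by ring, show k + (l+1) = l+1+k by ring]
    have e2 : BB (Q^2) x (k+1+l) l = bF (Q^2) x (l+1) * BB (Q^2) x (k+(l+1)) (l+1) := by
      simp only [BB]
      rw [Finset.prod_eq_prod_Ico_succ_bot (by omega), show k+1+l = k+(l+1) by ring]
    rw [e1, e2, ih, aF_eq Q Q' x h]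
    ring

lemma term_eq (Q Q' x : T) (h : Q * Q' = 1) (k l : ℕ) :
    cc (Q^2) (-Q' ^ (k+l)) (-Q ^ (k+l)) k * AA (Q^2) (-Q' ^ (k+l)) x k * BB (Q^2) x (k+l) k =
    Q' ^ (3*k*l) * (Q' ^ k - Q' ^ l) * (BB (Q^2) x (k+l) l * BB (Q^2) x (k+l) k) := by
  rw [AA_eq Q Q' x h]
  have e : cc (Q^2) (-Q' ^ (k+l)) (-Q ^ (k+l)) k * Q' ^ (2*k^2+4*k*l+2*k) =
      Q' ^ (3*k*l) * (Q' ^ k - Q' ^ l) := by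
    have c := two_choose_two k
    have e1 : (Q^2) ^ (k.choose 2) * (Q^2) ^ k * Q ^ ((k+l)*k) = Q ^ (2*k^2+k*l+k) := by
      rw [← pow_mul, ← pow_mul, ← pow_add, ← pow_add]; congr 1; linear_combination c
    have e2 : (-1 : T) ^ k * (-1) ^ k = 1 := by rw [← mul_pow]; simp
    have e3 : Q ^ (2*k^2+k*l+k) * Q' ^ (2*k^2+4*k*l+2*k) = Q' ^ (3*k*l+k) :=
      QQ_cancel Q Q' h _ _ _ (by ring)
    have e4 : Q' ^ (k+l) * Q ^ (2*k) * Q' ^ (3*k*l+k) = Q' ^ (3*k*l+l) := by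
      rw [mul_comm (Q' ^ (k+l)), mul_assoc, ← pow_add]
      exact QQ_cancel Q Q' h _ _ _ (by ring)
    have e5 : (Q^2 * -Q ^ (k+l)) ^ k = (-1) ^ k * ((Q^2) ^ k * Q ^ ((k+l)*k)) := by
      rw [pow_mul Q (k+l) k, ← mul_pow, ← mul_pow]; ring
    simp only [cc]
    rw [e5]
    rw [← pow_mul Q 2 k] at *
    calc _ = ((-1 : T) ^ k * (-1) ^ k) * (1 - Q' ^ (k+l) * Q ^ (2*k)) * ((Q^2) ^ (k.choose 2) * Q ^ (2*k) * Q ^ ((k+l)*k)) * Q' ^ (2*k^2+4*k*l+2*k) := by ring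
      _ = (1 - Q' ^ (k+l) * Q ^ (2*k)) * Q' ^ (3*k*l+k) := by rw [e2, e1, one_mul, mul_assoc, e3]
      _ = _ := by rw [sub_mul, e4, one_mul, pow_add, pow_add]; ring
  rw [← e]; ring

lemma SS_zero (Q Q' x : T) (h : Q * Q' = 1) (h2 : IsUnit (2 : T)) (N : ℕ) :
    SS (Q^2) (-Q' ^ N) (-Q ^ N) x N = 0 := by
  have : SS (Q^2) (-Q' ^ N) (-Q ^ N) x N = - SS (Q^2) (-Q' ^ N) (-Q ^ N) x N := by
    conv_rhs => rw [SS, ← Finset.sum_range_reflect]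
    rw [SS, ← Finset.sum_neg_distrib]
    apply Finset.sum_congr rfl
    intro k hk
    obtain ⟨l, rfl⟩ : ∃ l, N = k + l := ⟨N - k, by simp at hk; omega⟩
    rw [show k + l + 1 - 1 - k = l by omega, term_eq Q Q' x h]
    have := term_eq Q Q' x h l k
    rw [add_comm l k] at this
    rw [this]; ring
  have h3 : (2 : T) * SS (Q^2) (-Q' ^ N) (-Q ^ N) x N = 0 := by linear_combination this
  exact (h2.mul_right_eq_zero).1 h3

lemma SS_dvd (Q Q' y y' w x : T) (hQ : Q * Q' = 1) (hy : y * y' = 1) (h2u : IsUnit (2 : T))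
    (hw : w ∣ 1 + y) (N : ℕ) : w ∣ SS (Q^2) (y * Q' ^ N) (y' * Q ^ N) x N := by
  rw [← Ideal.mem_span_singleton, ← Ideal.Quotient.eq_zero_iff_mem]
  have key : ∀ φ : T →+* T ⧸ Ideal.span {w}, φ (1 + y) = 0 →
      φ (SS (Q^2) (y * Q' ^ N) (y' * Q ^ N) x N) = 0 := by
    intro φ hφ
    have hy1 : φ y = -1 := by
      simp only [map_add, map_one] at hφ
      linear_combination hφ
    have hy2 : φ y' = -1 := by
      have : φ y * φ y' = 1 := by rw [← map_mul, hy]; simp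
      rw [hy1] at this
      linear_combination -this
    have hQQ : φ Q * φ Q' = 1 := by rw [← map_mul, hQ]; simp
    rw [map_SS φ]
    have e1 : φ (Q^2) = (φ Q)^2 := by simp
    have e2 : φ (y * Q' ^ N) = - (φ Q')^N := by simp [hy1]
    have e3 : φ (y' * Q ^ N) = - (φ Q)^N := by simp [hy2]
    rw [e1, e2, e3]
    apply SS_zero _ _ _ hQQ
    have h2φ : φ 2 = 2 := by
      rw [← one_add_one_eq_two, map_add, map_one, one_add_one_eq_two]
    rw [← h2φ]
    exact h2u.map φ
  apply key
  rw [Ideal.Quotient.eq_zero_iff_mem, Ideal.mem_span_singleton]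
  exact hw

end ring

section field
variable {K : Type*} [Field K]

lemma AA_qp (p s x : K) (hx : x ≠ 0) (k : ℕ) :
    AA p s x k = x ^ k * (qp (s^2 * x) p k * qp (s^2 / x) p k) := by
  simp only [AA, qp]
  rw [← Finset.prod_mul_distrib]
  nth_rewrite 2 [show k = (range k).card by simp]
  rw [← Finset.prod_const, ← Finset.prod_mul_distrib]
  apply Finset.prod_congr rfl
  intro j _
  simp only [aF]; field_simp

lemma BB0_qp (p x : K) (hx : x ≠ 0) (k : ℕ) :
    BB p x k 0 = x ^ k * (qp (p * x) p k * qp (p / x) p k) := by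
  simp only [BB, qp]
  rw [← Finset.prod_mul_distrib, ← Finset.range_eq_Ico]
  nth_rewrite 2 [show k = (range k).card by simp]
  rw [← Finset.prod_const, ← Finset.prod_mul_distrib]
  apply Finset.prod_congr rfl
  intro j _
  simp only [bF]; field_simp; ring

lemma BB_split (p x : K) (N k : ℕ) (h : k ≤ N) : BB p x N 0 = BB p x k 0 * BB p x N k := by
  simp only [BB]
  rw [Finset.prod_Ico_consecutive _ (by omega) h]

lemma SS_qp (p s s' x : K) (hx : x ≠ 0) (N : ℕ) (hB : BB p x N 0 ≠ 0) :
    SS p s s' x N = BB p x N 0 * ∑ k ∈ range (N+1), cc p s s' k *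
      (qp (s^2 * x) p k * qp (s^2 / x) p k / (qp (p * x) p k * qp (p / x) p k)) := by
  rw [SS, Finset.mul_sum]
  apply Finset.sum_congr rfl
  intro k hk
  have := BB_split p x N k (by simp at hk; omega)
  rw [this] at hB ⊢
  have hk0 := left_ne_zero_of_mul hB
  rw [BB0_qp p x hx k] at hk0 ⊢
  rw [AA_qp p s x hx]
  have n1 := left_ne_zero_of_mul (right_ne_zero_of_mul hk0)
  have n2 := right_ne_zero_of_mul (right_ne_zero_of_mul hk0)
  generalize qp (p * x) p k = U at *
  generalize qp (p / x) p k = V at *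
  field_simp

lemma pref_eq (p y : K) (hp : p ≠ 0) (hy : y ≠ 0) (N : ℕ) :
    qp (y^2 / p ^ N) p (N+1) =
      (1 - y^2) * (-1) ^ N * (y^2) ^ N / p ^ ((N+1).choose 2) * qp (p / y^2) p N := by
  induction N with
  | zero => simp [qp]
  | succ N ih =>
    rw [qp_succ']
    have e : y^2 / p ^ (N+1) * p = y^2 / p ^ N := by field_simp; ring
    rw [e, ih, qp_succ, Nat.choose_succ_succ' (N+1)]
    simp only [Nat.choose_one_right, pow_add]
    field_simp
    ring

/-- coefficient of the right-hand side -/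
noncomputable def gg (p s y : K) (N k : ℕ) : K :=
  (1 - y^2) * (-1) ^ N * (y^2) ^ N / p ^ ((N+1).choose 2) /
    (qp p p k * qp (s^2) p k * (1 - s * p ^ k)) * (p / s^2) ^ k

lemma vanish1 (p s y : K) (hp : p ≠ 0) (hy : y ≠ 0) (N : ℕ) (hs : s^2 = y^2 / p ^ N)
    (h1 : ∀ j : ℕ, p * p ^ j ≠ 1)
    (h2 : ∀ j : ℕ, s ^ 2 * p ^ j ≠ 1) (h4 : ∀ j : ℕ, s * p ^ j ≠ 1)
    (h3 : ∀ j < N, p / y^2 * p ^ j ≠ 1) :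
    ∑ k ∈ range (N+1), cc p s s⁻¹ k *
      (qp (s^2 / y^2) p k * qp (s^2 * y^2) p k / (qp (p / y^2) p k * qp (p * y^2) p k)) =
    ∑ k ∈ range (N+1), gg p s y N k * (qp (s^2 / y^2) p k * qp (s^2 * y^2) p k) := by
  have hpN : p ^ N ≠ 0 := pow_ne_zero _ hp
  have hs0 : s ≠ 0 := by
    rintro rfl
    have : y^2 / p ^ N ≠ 0 := div_ne_zero (pow_ne_zero _ hy) hpN
    rw [← hs] at this; simp at this
  have f1 : s^2 * p / (s^2 * y^2) = p / y^2 := by field_simp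
  have f2 : s^2 / y^2 = (p ^ N)⁻¹ := by rw [hs]; field_simp
  have f3 : s^2 * p ^ (N+1) = p * y^2 := by rw [hs]; field_simp; ring
  have f4 : s^2 * p ^ (N+1) / (s^2 * y^2) = p / s^2 := by
    rw [f3]; field_simp
  have w := watson s (s^2 * y^2) p hp (mul_ne_zero (pow_ne_zero _ hs0) (pow_ne_zero _ hy)) hs0 h1 h2 h4 N
    (by rw [f1]; exact h3)
  rw [f4, f1, f3, ← f2] at w
  have n3 : qp (p / y^2) p N ≠ 0 := qp_ne _ _ _ h3
  have pe := pref_eq p y hp hy N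
  rw [← hs, qp_succ'] at pe
  rw [pe, mul_div_assoc, div_self n3, mul_one, Finset.mul_sum] at w
  convert w using 1
  · apply Finset.sum_congr rfl
    intro k _
    have : (p / s^2) ^ k * s ^ k = (p * s⁻¹) ^ k := by
      rw [← mul_pow]; congr 1; field_simp
    simp only [cc]
    rw [← this]
    ring
  · apply Finset.sum_congr rfl
    intro k _
    simp only [gg]
    ring

lemma main_abs (R : Subring K) (N : ℕ) (Q Q' y y' w : R) (hQ : Q * Q' = 1) (hy : y * y' = 1)
    (hw0 : w ≠ 0) (h2u : IsUnit (2 : R)) (hw : w ∣ 1 + y) (hne : y^2 ≠ y'^2) (g : ℕ → R) (p s : K)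
    (hpQ : p = (Q : K)^2) (hsQ : s = y * (Q' : K) ^ N)
    (h1 : ∀ j : ℕ, p * p ^ j ≠ 1)
    (h2 : ∀ j : ℕ, s ^ 2 * p ^ j ≠ 1) (h4 : ∀ j : ℕ, s * p ^ j ≠ 1)
    (h3 : ∀ j < N, p / (y:K)^2 * p ^ j ≠ 1)
    (h3' : ∀ j < N, p * (y:K)^2 * p ^ j ≠ 1)
    (hg : ∀ k ≤ N, (w : K) * g k = gg p s y N k) :
    ∃ h : R, (qp p p N * qp p p N) *
      (∑ k ∈ range (N+1), cc p s s⁻¹ k * (qp (s^2) p k * qp (s^2) p k / (qp p p k * qp p p k)) -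
       ∑ k ∈ range (N+1), gg p s y N k * (qp (s^2) p k * qp (s^2) p k)) =
      (w : K) * (1 - y^2) * (1 - y'^2) * h := by
  have hQK : (Q : K) * Q' = 1 := by exact_mod_cast hQ
  have hyK : (y : K) * y' = 1 := by exact_mod_cast hy
  have hQ0 : (Q : K) ≠ 0 := left_ne_zero_of_mul_eq_one hQK
  have hy0 : (y : K) ≠ 0 := left_ne_zero_of_mul_eq_one hyK
  have hy'0 : (y' : K) ≠ 0 := right_ne_zero_of_mul_eq_one hyK
  have hQ'0 : (Q' : K) ≠ 0 := right_ne_zero_of_mul_eq_one hQK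
  have hp : p ≠ 0 := by rw [hpQ]; exact pow_ne_zero _ hQ0
  have hs0 : s ≠ 0 := by rw [hsQ]; exact mul_ne_zero hy0 (pow_ne_zero _ hQ'0)
  have hQinv : (Q' : K) = (Q : K)⁻¹ := eq_inv_of_mul_eq_one_right hQK
  have hyinv : (y' : K) = (y : K)⁻¹ := eq_inv_of_mul_eq_one_right hyK
  have hs2 : s^2 = (y:K)^2 / p ^ N := by
    rw [eq_div_iff (pow_ne_zero _ hp), hsQ, hpQ]
    have : (Q' : K) ^ N * Q ^ N = 1 := by rw [← mul_pow, mul_comm, hQK, one_pow]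
    rw [← pow_mul, mul_comm 2 N, pow_mul]
    linear_combination (y:K)^2 * (1 + (Q' : K) ^ N * Q ^ N) * this
  -- polynomials over R
  let pR : R := Q^2
  let sR : R := y * Q' ^ N
  let sR' : R := y' * Q ^ N
  let S : R[X] := SS (C pR) (C sR) (C sR') X N
  let G : R[X] := BB (C pR) X N 0 * ∑ k ∈ range (N+1), C (g k) * AA (C pR) (C sR) X k * X ^ (N-k)
  have hS : C w ∣ S := by
    have hm : ∀ u v : R, u * v = 1 → (C u : R[X]) * C v = 1 := by
      intro u v h; rw [← C_mul, h, C_1]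
    have h2C : IsUnit (2 : R[X]) := by
      have h22 : (C : R →+* R[X]) 2 = 2 := by
        rw [← one_add_one_eq_two, map_add, map_one, one_add_one_eq_two]
      rw [← h22]
      exact h2u.map (C : R →+* R[X])
    have h0 := SS_dvd (C Q : R[X]) (C Q') (C y) (C y') (C w) X (hm _ _ hQ) (hm _ _ hy)
      h2C (by simpa using map_dvd (C : R →+* R[X]) hw) N
    have e1 : (C pR : R[X]) = C Q ^ 2 := by simp [pR]
    have e2 : (C sR : R[X]) = C y * C Q' ^ N := by simp [sR]
    have e3 : (C sR' : R[X]) = C y' * C Q ^ N := by simp [sR']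
    simp only [S]
    rw [e1, e2, e3]
    exact h0
  obtain ⟨S1, hS1⟩ := hS
  let P1 : R[X] := X ^ N * S1 - G
  -- evaluation
  have ev : ∀ x : R, (x : K) ≠ 0 → BB p (x:K) N 0 ≠ 0 →
      (w : K) * (P1.eval x : R) = (x:K)^N * BB p (x:K) N 0 *
        (∑ k ∈ range (N+1), cc p s s⁻¹ k *
          (qp (s^2 * x) p k * qp (s^2 / x) p k / (qp (p * x) p k * qp (p / x) p k)) -
         ∑ k ∈ range (N+1), gg p s y N k * (qp (s^2 * x) p k * qp (s^2 / x) p k)) := by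
    intro x hx hB
    let f : R[X] →+* K := R.subtype.comp (evalRingHom x)
    have fC : ∀ c : R, f (C c) = c := by intro c; simp [f]
    have fX : f X = x := by simp [f]
    have e0 : ((P1.eval x : R) : K) = f P1 := by simp [f]
    have e1 : f (C pR) = p := by rw [fC, hpQ]; simp [pR]
    have e2 : f (C sR) = s := by rw [fC, hsQ]; simp [sR]
    have e3 : f (C sR') = s⁻¹ := by
      rw [fC, hsQ]; simp [sR', hyinv, hQinv, mul_comm]
    have eS : (w : K) * f S1 = SS p s s⁻¹ (x:K) N := by
      rw [← fC w, ← map_mul, ← hS1, map_SS, e1, e2, e3, fX]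
    have eG : (w : K) * f G = (x:K)^N * BB p (x:K) N 0 *
        ∑ k ∈ range (N+1), gg p s y N k * (qp (s^2 * x) p k * qp (s^2 / x) p k) := by
      simp only [G, map_mul, map_BB, map_sum, e1, fX, map_AA, e2, map_pow, fC]
      rw [mul_left_comm, mul_comm ((x:K)^N), mul_assoc]
      congr 1
      rw [Finset.mul_sum, Finset.mul_sum]
      apply Finset.sum_congr rfl
      intro k hk
      have hk' : k ≤ N := by simp at hk; omega
      rw [← hg k hk', AA_qp _ _ _ hx]
      have : (x:K)^N = (x:K)^k * (x:K)^(N-k) := by rw [← pow_add]; congr 1; omega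
      rw [this]; ring
    rw [e0]
    simp only [P1, map_sub, map_mul, map_pow, fX]
    rw [mul_sub, eG, mul_left_comm, eS, SS_qp p s s⁻¹ x hx N hB]
    ring
  have v := vanish1 p s y hp hy0 N hs2 h1 h2 h4 h3
  have hwK : (w : K) ≠ 0 := by exact_mod_cast hw0
  have n1 : qp (p / (y:K)^2) p N ≠ 0 := qp_ne _ _ _ h3
  have n2 : qp (p * (y:K)^2) p N ≠ 0 := qp_ne _ _ _ h3'
  have r1 : P1.eval (y^2) = 0 := by
    have hx : ((y^2 : R) : K) ≠ 0 := by push_cast; exact pow_ne_zero _ hy0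
    have := ev (y^2) hx (by
      rw [BB0_qp _ _ hx]; push_cast
      exact mul_ne_zero (pow_ne_zero _ (pow_ne_zero _ hy0)) (mul_ne_zero n2 n1))
    push_cast at this
    have z : ∀ k, qp (s^2 * (y:K)^2) p k * qp (s^2 / (y:K)^2) p k = qp (s^2 / (y:K)^2) p k * qp (s^2 * (y:K)^2) p k := fun k => mul_comm _ _
    have z' : ∀ k, qp (p * (y:K)^2) p k * qp (p / (y:K)^2) p k = qp (p / (y:K)^2) p k * qp (p * (y:K)^2) p k := fun k => mul_comm _ _
    simp only [z, z'] at this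
    rw [v, sub_self, mul_zero] at this
    have := (mul_eq_zero.1 this).resolve_left hwK
    exact_mod_cast this
  have r2 : P1.eval (y'^2) = 0 := by
    have hx : ((y'^2 : R) : K) ≠ 0 := by push_cast; exact pow_ne_zero _ hy'0
    have d1 : ∀ u : K, u * (y':K)^2 = u / (y:K)^2 := by intro u; rw [hyinv]; field_simp
    have d2 : ∀ u : K, u / (y':K)^2 = u * (y:K)^2 := by intro u; rw [hyinv]; field_simp
    have := ev (y'^2) hx (by
      rw [BB0_qp _ _ hx]; push_cast; rw [d1, d2]
      exact mul_ne_zero (pow_ne_zero _ (pow_ne_zero _ hy'0)) (mul_ne_zero n1 n2))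
    push_cast at this
    simp only [d1, d2] at this
    rw [v, sub_self, mul_zero] at this
    have := (mul_eq_zero.1 this).resolve_left hwK
    exact_mod_cast this
  obtain ⟨P2, hP2⟩ := dvd_iff_isRoot.2 r1
  have r3 : P2.eval (y'^2) = 0 := by
    rw [hP2] at r2
    simp only [eval_mul, eval_sub, eval_X, eval_C] at r2
    exact (mul_eq_zero.1 r2).resolve_left (sub_ne_zero.2 hne.symm)
  obtain ⟨P3, hP3⟩ := dvd_iff_isRoot.2 r3
  refine ⟨P3.eval 1, ?_⟩
  have npp : qp p p N ≠ 0 := qp_ne _ _ _ (fun j _ => h1 j)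
  have := ev 1 (by simp) (by
    rw [BB0_qp _ _ (by simp)]; simp only [OneMemClass.coe_one, one_pow, one_mul, mul_one, div_one]
    exact mul_ne_zero npp npp)
  rw [BB0_qp _ _ (by simp)] at this
  simp only [OneMemClass.coe_one, one_pow, one_mul, mul_one, div_one] at this
  rw [← this, hP2, hP3]
  simp only [eval_mul, eval_sub, eval_X, eval_C]
  push_cast
  ring
end field

lemma qPoch_eq (x q : RatFunc ℚ) (k : ℕ) : qPoch x q k = qp x q k := rfl

noncomputable abbrev aM : ℚ[X] →+* RatFunc ℚ := algebraMap ℚ[X] (RatFunc ℚ)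

/-- Rational functions with no pole at `ζ` and `-ζ`. -/
def Rz (ζ : ℂ) : Subring (RatFunc ℚ) where
  carrier := {f | ∃ a b : ℚ[X], aeval ζ b ≠ 0 ∧ aeval (-ζ) b ≠ 0 ∧ f * aM b = aM a}
  mul_mem' := by
    rintro f g ⟨a, b, h1, h2, h3⟩ ⟨a', b', h1', h2', h3'⟩
    refine ⟨a * a', b * b', ?_, ?_, ?_⟩
    · rw [map_mul]; exact mul_ne_zero h1 h1'
    · rw [map_mul]; exact mul_ne_zero h2 h2'
    · rw [map_mul, map_mul, ← h3, ← h3']; ring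
  one_mem' := ⟨1, 1, by simp, by simp, by simp⟩
  add_mem' := by
    rintro f g ⟨a, b, h1, h2, h3⟩ ⟨a', b', h1', h2', h3'⟩
    refine ⟨a * b' + a' * b, b * b', ?_, ?_, ?_⟩
    · rw [map_mul]; exact mul_ne_zero h1 h1'
    · rw [map_mul]; exact mul_ne_zero h2 h2'
    · rw [map_mul, map_add, map_mul, map_mul, ← h3, ← h3']; ring
  zero_mem' := ⟨0, 1, by simp, by simp, by simp⟩
  neg_mem' := by
    rintro f ⟨a, b, h1, h2, h3⟩
    exact ⟨-a, b, h1, h2, by rw [map_neg, ← h3]; ring⟩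

lemma poly_mem (ζ : ℂ) (a : ℚ[X]) : aM a ∈ Rz ζ := ⟨a, 1, by simp, by simp, by simp⟩

lemma X_ne : (RatFunc.X : RatFunc ℚ) ≠ 0 := RatFunc.X_ne_zero

lemma aM_X : aM X = RatFunc.X := RatFunc.algebraMap_X

lemma X_zpow_mem (ζ : ℂ) (h : ζ ≠ 0) (m : ℤ) : (RatFunc.X : RatFunc ℚ) ^ m ∈ Rz ζ := by
  obtain ⟨k, rfl | rfl⟩ := m.eq_nat_or_neg
  · rw [zpow_natCast, ← aM_X, ← map_pow]; exact poly_mem _ _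
  · refine ⟨1, X ^ k, by simp [h], by simp [h], ?_⟩
    rw [map_pow, aM_X, zpow_neg, zpow_natCast, inv_mul_cancel₀ (pow_ne_zero _ X_ne), map_one]

lemma X_pow_sub_ne (ζ : ℂ) (c : ℚ) (k : ℕ) (h : aeval ζ (1 - C c * X ^ k : ℚ[X]) ≠ 0) :
    1 - aM (C c) * (RatFunc.X : RatFunc ℚ) ^ k ≠ 0 := by
  have : 1 - aM (C c) * (RatFunc.X : RatFunc ℚ) ^ k = aM (1 - C c * X ^ k) := by
    simp only [map_sub, map_one, map_mul, map_pow, aM_X]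
  rw [this]
  intro h0
  have : (1 - C c * X ^ k : ℚ[X]) = 0 :=
    (map_eq_zero_iff _ (IsFractionRing.injective ℚ[X] (RatFunc ℚ))).1 h0
  rw [this] at h; simp at h

lemma X_zpow_ne (m : ℤ) (hm : m ≠ 0) : (RatFunc.X : RatFunc ℚ) ^ m ≠ 1 := by
  have key : ∀ k : ℕ, k ≠ 0 → (RatFunc.X : RatFunc ℚ) ^ k ≠ 1 := by
    intro k hk h
    rw [← aM_X, ← map_pow, ← map_one aM] at h
    have := IsFractionRing.injective ℚ[X] (RatFunc ℚ) h
    have := congrArg natDegree this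
    simp at this; exact hk this
  obtain ⟨k, rfl | rfl⟩ := m.eq_nat_or_neg
  · rw [zpow_natCast]; exact key k (by simpa using hm)
  · rw [zpow_neg, zpow_natCast]
    intro h; exact key k (by simpa using hm) (inv_eq_one.1 h)

lemma root_ne {n : ℕ} (hodd : Odd n) {ζ : ℂ} (hζ : IsPrimitiveRoot ζ n) (k : ℕ)
    (hk : ¬ n ∣ k) (z : ℂ) (hz : z^2 = ζ^2) : (z ^ k)^2 ≠ 1 := by
  intro h
  rw [← pow_mul, mul_comm, pow_mul, hz, ← pow_mul] at h
  have := (hζ.pow_eq_one_iff_dvd _).1 h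
  have hc : Nat.Coprime n 2 := hodd.coprime_two_right
  exact hk (hc.dvd_of_dvd_mul_left this)

lemma inv_mem {n : ℕ} (hodd : Odd n) {ζ : ℂ} (hζ : IsPrimitiveRoot ζ n) (m : ℤ)
    (hm : ¬ (n : ℤ) ∣ m) (c : ℚ) (hc : c^2 = 1) :
    (1 - aM (C c) * (RatFunc.X : RatFunc ℚ) ^ m)⁻¹ ∈ Rz ζ := by
  have hcC : (algebraMap ℚ ℂ c)^2 = 1 := by rw [← map_pow, hc, map_one]
  have key : ∀ k : ℕ, ¬ n ∣ k → ∀ z : ℂ, z^2 = ζ^2 → 1 - (algebraMap ℚ ℂ c) * z ^ k ≠ 0 := by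
    intro k hk z hz h
    apply root_ne hodd hζ k hk z hz
    have : (algebraMap ℚ ℂ c) * z ^ k = 1 := by linear_combination -h
    have := congrArg (·^2) this
    simp only [mul_pow, hcC, one_mul, one_pow] at this
    exact this
  have key' : ∀ k : ℕ, ¬ n ∣ k → ∀ z : ℂ, z^2 = ζ^2 → z ^ k - (algebraMap ℚ ℂ c) ≠ 0 := by
    intro k hk z hz h
    apply key k hk z hz
    linear_combination -(algebraMap ℚ ℂ c) * h - hcC
  obtain ⟨k, rfl | rfl⟩ := m.eq_nat_or_neg
  · have hk : ¬ n ∣ k := by intro h; exact hm (by exact_mod_cast h)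
    have h1 : aeval ζ (1 - C c * X ^ k : ℚ[X]) ≠ 0 := by simpa using key k hk ζ rfl
    refine ⟨1, 1 - C c * X ^ k, h1, by simpa using key k hk (-ζ) (by ring), ?_⟩
    have := X_pow_sub_ne ζ c k h1
    rw [zpow_natCast]
    simp only [map_sub, map_one, map_mul, map_pow, aM_X]
    exact inv_mul_cancel₀ this
  · have hk : ¬ n ∣ k := by intro h; exact hm (by rw [dvd_neg]; exact_mod_cast h)
    refine ⟨X ^ k, X ^ k - C c, by simpa using key' k hk ζ rfl,
      by simpa using key' k hk (-ζ) (by ring), ?_⟩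
    have h1 : aeval ζ (1 - C c * X ^ k : ℚ[X]) ≠ 0 := by simpa using key k hk ζ rfl
    have h2 := X_pow_sub_ne ζ c k h1
    have hXk : (RatFunc.X : RatFunc ℚ) ^ k ≠ 0 := pow_ne_zero _ X_ne
    have hcc : aM (C c) * aM (C c) = 1 := by
      rw [← map_mul, ← C_mul, ← sq, hc]; simp
    have h3 : 1 - aM (C c) * ((RatFunc.X : RatFunc ℚ) ^ k)⁻¹ ≠ 0 := by
      intro h
      apply h2
      have : (RatFunc.X : RatFunc ℚ) ^ k - aM (C c) = 0 := by
        field_simp at h; simpa using h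
      linear_combination -(aM (C c)) * this - hcc
    rw [zpow_neg, zpow_natCast, inv_mul_eq_iff_eq_mul₀ h3]
    simp only [map_sub, map_pow, aM_X]
    field_simp

lemma inv_mem1 {n : ℕ} (hodd : Odd n) {ζ : ℂ} (hζ : IsPrimitiveRoot ζ n) (m : ℤ)
    (hm : ¬ (n : ℤ) ∣ m) : (1 - (RatFunc.X : RatFunc ℚ) ^ m)⁻¹ ∈ Rz ζ := by
  simpa using inv_mem hodd hζ m hm 1 (by norm_num)

lemma inv_mem2 {n : ℕ} (hodd : Odd n) {ζ : ℂ} (hζ : IsPrimitiveRoot ζ n) (m : ℤ)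
    (hm : ¬ (n : ℤ) ∣ m) : (1 + (RatFunc.X : RatFunc ℚ) ^ m)⁻¹ ∈ Rz ζ := by
  simpa using inv_mem hodd hζ m hm (-1) (by norm_num)

lemma qp_inv_mem {n : ℕ} (hodd : Odd n) {ζ : ℂ} (hζ : IsPrimitiveRoot ζ n) (m l : ℤ) (k : ℕ)
    (hm : ∀ j < k, ¬ (n : ℤ) ∣ m + l * j) :
    (qp ((RatFunc.X : RatFunc ℚ) ^ m) (RatFunc.X ^ l) k)⁻¹ ∈ Rz ζ := by
  simp only [qp]
  rw [← Finset.prod_inv_distrib]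
  apply Subring.prod_mem
  intro j hj
  rw [← zpow_natCast, ← zpow_mul, ← zpow_add₀ X_ne]
  exact inv_mem1 hodd hζ _ (hm j (by simpa using hj))

lemma final_dvd {n : ℕ} (hpos : 0 < n) {ζ : ℂ} (hζ : IsPrimitiveRoot ζ n) (D h : RatFunc ℚ)
    (hh : h ∈ Rz ζ)
    (hD : D = aM (((cyclotomic n ℚ).comp (-X)) ^ 3 * (cyclotomic n ℚ) ^ 2) * h) :
    ((cyclotomic n ℚ).comp (-X)) ^ 3 * (cyclotomic n ℚ) ^ 2 ∣ D.num := by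
  obtain ⟨a, b, h1, h2, h3⟩ := hh
  have key : ∀ b : ℚ[X], aeval ζ b ≠ 0 → IsCoprime (cyclotomic n ℚ) b := by
    intro b hb
    rw [(cyclotomic.irreducible_rat hpos).coprime_iff_not_dvd]
    rintro ⟨c, rfl⟩
    apply hb
    have : aeval ζ (cyclotomic n ℚ) = 0 := by
      rw [cyclotomic_eq_minpoly_rat hζ hpos]; exact minpoly.aeval _ _
    rw [map_mul, this, zero_mul]
  have c1 := key b h1
  have c2 : IsCoprime ((cyclotomic n ℚ).comp (-X)) b := by
    have := (key (b.comp (-X)) (by rw [aeval_comp]; simpa using h2)).map (compRingHom (-X : ℚ[X]))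
    simpa [comp_assoc] using this
  set M := ((cyclotomic n ℚ).comp (-X)) ^ 3 * (cyclotomic n ℚ) ^ 2 with hM
  have cM : IsCoprime M b := (c2.pow_left).mul_left (c1.pow_left)
  apply cM.dvd_of_dvd_mul_right
  refine ⟨a * D.denom, ?_⟩
  apply IsFractionRing.injective ℚ[X] (RatFunc ℚ)
  change aM _ = aM _
  have hden : aM D.denom ≠ 0 := by
    intro h0
    exact D.denom_ne_zero ((map_eq_zero_iff _ (IsFractionRing.injective ℚ[X] (RatFunc ℚ))).1 h0)
  have e : D * aM D.denom = aM D.num := by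
    have := RatFunc.num_div_denom D
    rw [← eq_div_iff hden]; exact this.symm
  rw [map_mul, map_mul aM M, map_mul aM a, ← e, ← h3]
  linear_combination (aM D.denom * aM b) * hD


lemma qp_ratio {K : Type*} [Field K] (s p : K) (k : ℕ) (h : ∀ j : ℕ, s * p ^ j ≠ 1) :
    qp s p k / qp (p * s) p k = (1 - s) / (1 - s * p ^ k) := by
  have n1 : qp (p * s) p k ≠ 0 := by
    apply qp_ne
    intro j _ h'
    apply h (j+1)
    rw [← h', pow_succ]; ring
  have n2 : (1 - s * p ^ k) ≠ 0 := fun h' => h k (by linear_combination -h')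
  rw [div_eq_div_iff n1 n2]
  simp only [qp]
  have e1 := Finset.prod_range_succ (fun j => 1 - s * p ^ j) k
  have e2 := Finset.prod_range_succ' (fun j => 1 - s * p ^ j) k
  rw [e1] at e2
  rw [e2, mul_comm]
  simp only [pow_zero, mul_one]
  congr 1
  apply Finset.prod_congr rfl
  intro j _
  rw [pow_succ]; ring

lemma match_term1 (d k : ℕ) (r : ℤ) :
    (-1 : RatFunc ℚ) ^ k *
              ((1 + RatFunc.X ^ (2 * (d : ℤ) * k + r)) *
                qPoch (RatFunc.X ^ (2 * r)) (RatFunc.X ^ (2 * (d : ℤ))) k ^ 2) /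
              ((1 + RatFunc.X ^ r) *
                qPoch (RatFunc.X ^ (2 * (d : ℤ))) (RatFunc.X ^ (2 * (d : ℤ))) k ^ 2) *
              RatFunc.X ^ ((d : ℤ) * (k : ℤ) ^ 2 + (k : ℤ) * ((d : ℤ) - r)) =
    (1 + (RatFunc.X : RatFunc ℚ) ^ r)⁻¹ * (cc ((RatFunc.X : RatFunc ℚ) ^ (2 * (d : ℤ))) (RatFunc.X ^ r) (RatFunc.X ^ r)⁻¹ k *
      (qp (((RatFunc.X : RatFunc ℚ) ^ r)^2) (RatFunc.X ^ (2 * (d : ℤ))) k * qp (((RatFunc.X : RatFunc ℚ) ^ r)^2) (RatFunc.X ^ (2 * (d : ℤ))) k /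
       (qp (RatFunc.X ^ (2 * (d : ℤ))) (RatFunc.X ^ (2 * (d : ℤ))) k * qp (RatFunc.X ^ (2 * (d : ℤ))) (RatFunc.X ^ (2 * (d : ℤ))) k))) := by
  have c := two_choose_two k
  have c' : (2 * (k.choose 2 : ℤ) + k = k * k) := by exact_mod_cast c
  have e1 : (RatFunc.X : RatFunc ℚ) ^ ((d : ℤ) * (k : ℤ) ^ 2 + (k : ℤ) * ((d : ℤ) - r)) =
      (RatFunc.X ^ (2 * (d : ℤ))) ^ (k.choose 2) * (RatFunc.X ^ (2 * (d : ℤ)) * (RatFunc.X ^ r)⁻¹) ^ k := by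
    rw [← zpow_neg, ← zpow_add₀ X_ne, ← zpow_natCast, ← zpow_natCast, ← zpow_mul, ← zpow_mul,
      ← zpow_add₀ X_ne]
    congr 1
    linear_combination -(d : ℤ) * c'
  have e2 : (RatFunc.X : RatFunc ℚ) ^ (2 * (d : ℤ) * k + r) = RatFunc.X ^ r * (RatFunc.X ^ (2 * (d : ℤ))) ^ k := by
    rw [← zpow_natCast, ← zpow_mul, ← zpow_add₀ X_ne]
    congr 1; ring
  have e3 : (RatFunc.X : RatFunc ℚ) ^ (2 * r) = (RatFunc.X ^ r)^2 := by
    rw [← zpow_natCast, ← zpow_mul]; congr 1; push_cast; ring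
  rw [e1, e2, e3, qPoch_eq, qPoch_eq]
  simp only [cc]
  rw [div_eq_mul_inv, div_eq_mul_inv, mul_inv]
  simp only [sq]
  ring

lemma match_term2 (n d k N : ℕ) (r : ℤ) (hd : 0 < d) (hN : (d : ℤ) * N = n - r)
    (h2 : ∀ j : ℕ, ((RatFunc.X : RatFunc ℚ) ^ r) ^ 2 * (RatFunc.X ^ (2 * (d : ℤ))) ^ j ≠ 1)
    (h4 : ∀ j : ℕ, (RatFunc.X : RatFunc ℚ) ^ r * (RatFunc.X ^ (2 * (d : ℤ))) ^ j ≠ 1) :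
    (-1 : RatFunc ℚ) ^ N *
            (qInt (RatFunc.X ^ (2 : ℤ)) (n : ℤ) / qInt (RatFunc.X ^ (2 : ℤ)) r) *
            RatFunc.X ^ (((n : ℤ) - r) * ((n : ℤ) + r - d) / d) *
              (qPoch (RatFunc.X ^ (2 * r)) (RatFunc.X ^ (2 * (d : ℤ))) k *
                qPoch (RatFunc.X ^ r) (RatFunc.X ^ (2 * (d : ℤ))) k /
                (qPoch (RatFunc.X ^ (2 * (d : ℤ))) (RatFunc.X ^ (2 * (d : ℤ))) k *
                  qPoch (RatFunc.X ^ (2 * (d : ℤ) + r)) (RatFunc.X ^ (2 * (d : ℤ))) k) *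
                RatFunc.X ^ (2 * (k : ℤ) * ((d : ℤ) - r))) =
    (1 + (RatFunc.X : RatFunc ℚ) ^ r)⁻¹ * (gg ((RatFunc.X : RatFunc ℚ) ^ (2 * (d : ℤ))) (RatFunc.X ^ r) (RatFunc.X ^ (n : ℤ)) N k *
      (qp (((RatFunc.X : RatFunc ℚ) ^ r)^2) (RatFunc.X ^ (2 * (d : ℤ))) k * qp (((RatFunc.X : RatFunc ℚ) ^ r)^2) (RatFunc.X ^ (2 * (d : ℤ))) k)) := by
  have c' : (2 * ((N+1).choose 2 : ℤ) = N * (N + 1)) := by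
    have := two_choose_two (N+1)
    zify at this
    linear_combination this
  have e3 : (RatFunc.X : RatFunc ℚ) ^ (2 * r) = (RatFunc.X ^ r)^2 := by
    rw [← zpow_natCast, ← zpow_mul]; congr 1; push_cast; ring
  have e4 : (RatFunc.X : RatFunc ℚ) ^ (2 * (d : ℤ) + r) = RatFunc.X ^ (2 * (d : ℤ)) * RatFunc.X ^ r := by
    rw [← zpow_add₀ X_ne]
  have e5 : (RatFunc.X : RatFunc ℚ) ^ (2 * (k : ℤ) * ((d : ℤ) - r)) = (RatFunc.X ^ (2 * (d : ℤ)) / (RatFunc.X ^ r)^2) ^ k := by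
    rw [← e3, ← zpow_sub₀ X_ne, ← zpow_natCast, ← zpow_mul]; congr 1; ring
  have hd' : (d : ℤ) ≠ 0 := by exact_mod_cast hd.ne'
  have e6 : (RatFunc.X : RatFunc ℚ) ^ (((n : ℤ) - r) * ((n : ℤ) + r - d) / d) =
      ((RatFunc.X ^ (n : ℤ))^2) ^ N / (RatFunc.X ^ (2 * (d : ℤ))) ^ ((N+1).choose 2) := by
    rw [← zpow_natCast, ← zpow_natCast, ← zpow_natCast, ← zpow_mul, ← zpow_mul, ← zpow_mul, ← zpow_sub₀ X_ne, ← hN,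
      mul_assoc, Int.mul_ediv_cancel_left _ hd']
    congr 1
    push_cast
    linear_combination (N : ℤ) * hN + (d : ℤ) * c'
  have hX2 : (1 - (RatFunc.X : RatFunc ℚ) ^ (2 : ℤ)) ≠ 0 := by
    intro h; exact X_zpow_ne 2 (by norm_num) (by linear_combination -h)
  have e7 : qInt (RatFunc.X ^ (2 : ℤ)) (n : ℤ) / qInt (RatFunc.X ^ (2 : ℤ)) r =
      (1 - (RatFunc.X ^ (n : ℤ))^2) / (1 - (RatFunc.X ^ r)^2) := by
    simp only [qInt]
    rw [div_div_div_cancel_right₀ hX2, ← zpow_mul, ← zpow_mul, e3, mul_comm 2 (n : ℤ), zpow_mul]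
    norm_cast
  have e8 := qp_ratio ((RatFunc.X : RatFunc ℚ) ^ r) (RatFunc.X ^ (2 * (d : ℤ))) k h4
  have n0 : 1 - (RatFunc.X : RatFunc ℚ) ^ r * (RatFunc.X ^ (2 * (d : ℤ))) ^ k ≠ 0 := fun h => h4 k (by linear_combination -h)
  have n1 : 1 - (RatFunc.X : RatFunc ℚ) ^ r ≠ 0 := fun h => h4 0 (by linear_combination -h)
  have n2 : 1 - ((RatFunc.X : RatFunc ℚ) ^ r)^2 ≠ 0 := fun h => h2 0 (by linear_combination -h)
  have n4 : qp (((RatFunc.X : RatFunc ℚ) ^ r)^2) (RatFunc.X ^ (2 * (d : ℤ))) k ≠ 0 := qp_ne _ _ _ (fun j _ => h2 j)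
  rw [e7, e6, e5, e4, e3, qPoch_eq, qPoch_eq, qPoch_eq, qPoch_eq, mul_div_mul_comm, e8]
  simp only [gg]
  generalize qp (((RatFunc.X : RatFunc ℚ) ^ r)^2) (RatFunc.X ^ (2 * (d : ℤ))) k = A at *
  generalize qp ((RatFunc.X : RatFunc ℚ) ^ (2 * (d : ℤ))) (RatFunc.X ^ (2 * (d : ℤ))) k = B at *
  generalize ((RatFunc.X : RatFunc ℚ) ^ (2 * (d : ℤ)) / (RatFunc.X ^ r)^2) ^ k = c at *
  generalize 1 - (RatFunc.X : RatFunc ℚ) ^ r * (RatFunc.X ^ (2 * (d : ℤ))) ^ k = u at *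
  generalize ((RatFunc.X : RatFunc ℚ) ^ (2 * (d : ℤ))) ^ ((N+1).choose 2) = v at *
  generalize (((RatFunc.X : RatFunc ℚ) ^ (n : ℤ))^2) ^ N = y' at *
  generalize (RatFunc.X : RatFunc ℚ) ^ r = s at *
  generalize (RatFunc.X : RatFunc ℚ) ^ (n : ℤ) = y at *
  have n3 : 1 + s ≠ 0 := by
    intro h; apply n2; linear_combination (1 - s) * h
  have e9 : (1 - s) / (1 - s^2) = (1 + s)⁻¹ := by
    field_simp; ring
  calc _ = (-1) ^ N * (1 - y^2) * y' / v * (A / B / u) * c * ((1 - s) / (1 - s^2)) := by ring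
    _ = _ := by
      rw [e9]
      field_simp


lemma zdiv {n d : ℕ} (hgcd : Nat.gcd n d = 1) (hodd : Odd n) (m : ℤ) :
    ((n : ℤ) ∣ d * m → (n : ℤ) ∣ m) ∧ ((n : ℤ) ∣ 2 * m → (n : ℤ) ∣ m) := by
  constructor
  · intro h
    exact (Int.isCoprime_iff_gcd_eq_one.2 (by simpa using hgcd)).dvd_of_dvd_mul_left h
  · intro h
    have hc : Nat.Coprime n 2 := hodd.coprime_two_right
    exact (Int.isCoprime_iff_gcd_eq_one.2 (by
      have : Int.gcd (n : ℤ) ((2 : ℕ) : ℤ) = 1 := by rw [Int.gcd_natCast_natCast]; exact hc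
      exact_mod_cast this)).dvd_of_dvd_mul_left h

lemma small_ndvd {n : ℕ} (m : ℤ) (h0 : m ≠ 0) (h1 : m < n) (h2 : -(n : ℤ) < m) : ¬ (n : ℤ) ∣ m := by
  intro h
  exact h0 (Int.eq_zero_of_abs_lt_dvd h (abs_lt.2 ⟨h2, h1⟩))

lemma gg_mem {n d N : ℕ} {r : ℤ} (hodd : Odd n) (hgcd : Nat.gcd n d = 1)
    (hN : (d : ℤ) * N = n - r) (hNn : N < n) {ζ : ℂ} (hζ : IsPrimitiveRoot ζ n)
    (c W : ℚ[X]) (hc : X ^ n + 1 = W * c)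
    (h4 : ∀ j : ℕ, (RatFunc.X : RatFunc ℚ) ^ r * (RatFunc.X ^ (2 * (d : ℤ))) ^ j ≠ 1)
    (k : ℕ) (hk : k ≤ N) :
    ∃ g : Rz ζ, aM W * (g : RatFunc ℚ) =
      gg ((RatFunc.X : RatFunc ℚ) ^ (2 * (d : ℤ))) (RatFunc.X ^ r) (RatFunc.X ^ (n : ℤ)) N k := by
  have hpos : 0 < n := by omega
  have hζ0 : ζ ≠ 0 := hζ.ne_zero hpos.ne'
  have hy : (RatFunc.X : RatFunc ℚ) ^ (n : ℤ) + 1 = aM W * aM c := by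
    rw [← map_mul, ← hc, zpow_natCast, map_add, map_pow, aM_X, map_one]
  have e3 : (RatFunc.X : RatFunc ℚ) ^ (2 * r) = (RatFunc.X ^ r)^2 := by
    rw [← zpow_natCast, ← zpow_mul]; congr 1; push_cast; ring
  have m1 : (qp ((RatFunc.X : RatFunc ℚ) ^ (2 * (d : ℤ))) (RatFunc.X ^ (2 * (d : ℤ))) k)⁻¹ ∈ Rz ζ := by
    apply qp_inv_mem hodd hζ
    intro j hj h
    rw [show 2 * (d : ℤ) + 2 * d * j = 2 * (d * (j + 1)) by ring] at h
    have h := (zdiv hgcd hodd _).1 ((zdiv hgcd hodd _).2 h)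
    exact small_ndvd _ (by omega) (by omega) (by omega) h
  have m2 : (qp (((RatFunc.X : RatFunc ℚ) ^ r)^2) (RatFunc.X ^ (2 * (d : ℤ))) k)⁻¹ ∈ Rz ζ := by
    rw [← e3]
    apply qp_inv_mem hodd hζ
    intro j hj h
    rw [show 2 * r + 2 * d * j = 2 * (n - d * (N - j : ℤ)) by linear_combination 2 * hN] at h
    have h := (zdiv hgcd hodd _).2 h
    rw [dvd_sub_right (dvd_refl _)] at h
    have h := (zdiv hgcd hodd _).1 h
    exact small_ndvd _ (by omega) (by omega) (by omega) h
  have ex : (RatFunc.X : RatFunc ℚ) ^ r * (RatFunc.X ^ (2 * (d : ℤ))) ^ k =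
      RatFunc.X ^ ((n : ℤ) + d * (2 * k - N)) := by
    rw [← zpow_natCast, ← zpow_mul, ← zpow_add₀ X_ne]
    congr 1; linear_combination hN
  have m3 : ∃ e ∈ Rz ζ, (1 - ((RatFunc.X : RatFunc ℚ) ^ (n : ℤ))^2) * (1 - (RatFunc.X : RatFunc ℚ) ^ r * (RatFunc.X ^ (2 * (d : ℤ))) ^ k)⁻¹ = aM W * e := by
    by_cases h : 2 * k = N
    · refine ⟨aM c, poly_mem _ _, ?_⟩
      have ht := h4 k
      rw [ex] at ht ⊢
      have h0 : (2 * (k : ℤ) - N) = 0 := by omega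
      rw [h0, mul_zero, add_zero] at ht ⊢
      have n0 : 1 - (RatFunc.X : RatFunc ℚ) ^ (n : ℤ) ≠ 0 := fun h => ht (by linear_combination -h)
      rw [← hy]
      rw [← div_eq_mul_inv, div_eq_iff n0]
      ring
    · refine ⟨aM c * (1 - (RatFunc.X : RatFunc ℚ) ^ (n : ℤ)) * (1 - (RatFunc.X : RatFunc ℚ) ^ r * (RatFunc.X ^ (2 * (d : ℤ))) ^ k)⁻¹, ?_, ?_⟩
      · apply Subring.mul_mem
        · exact Subring.mul_mem _ (poly_mem _ _) (Subring.sub_mem _ (Subring.one_mem _) (X_zpow_mem _ hζ0 _))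
        · rw [ex]
          apply inv_mem1 hodd hζ
          intro h
          rw [dvd_add_right (dvd_refl _)] at h
          have h := (zdiv hgcd hodd _).1 h
          exact small_ndvd _ (by omega) (by omega) (by omega) h
      · rw [← mul_assoc, ← mul_assoc, ← hy]
        ring
  obtain ⟨e, he, hE⟩ := m3
  have m4 : ((RatFunc.X : RatFunc ℚ) ^ (2 * (d : ℤ)) / (RatFunc.X ^ r)^2) ^ k ∈ Rz ζ := by
    rw [← e3, ← zpow_sub₀ X_ne]
    exact Subring.pow_mem _ (X_zpow_mem _ hζ0 _) _
  have m5 : (((RatFunc.X : RatFunc ℚ) ^ (2 * (d : ℤ))) ^ ((N+1).choose 2))⁻¹ ∈ Rz ζ := by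
    rw [← zpow_natCast, ← zpow_mul, ← zpow_neg]
    exact X_zpow_mem _ hζ0 _
  have m6 : ((RatFunc.X : RatFunc ℚ) ^ (n : ℤ)) ∈ Rz ζ := X_zpow_mem _ hζ0 _
  have m7 : (-1 : RatFunc ℚ) ^ N ∈ Rz ζ := Subring.pow_mem _ (Subring.neg_mem _ (Subring.one_mem _)) _
  refine ⟨⟨e * (-1) ^ N * (((RatFunc.X : RatFunc ℚ) ^ (n : ℤ))^2) ^ N * (((RatFunc.X : RatFunc ℚ) ^ (2 * (d : ℤ))) ^ ((N+1).choose 2))⁻¹ *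
    (qp ((RatFunc.X : RatFunc ℚ) ^ (2 * (d : ℤ))) (RatFunc.X ^ (2 * (d : ℤ))) k)⁻¹ *
    (qp (((RatFunc.X : RatFunc ℚ) ^ r)^2) (RatFunc.X ^ (2 * (d : ℤ))) k)⁻¹ *
    ((RatFunc.X : RatFunc ℚ) ^ (2 * (d : ℤ)) / (RatFunc.X ^ r)^2) ^ k, ?_⟩, ?_⟩
  · refine Subring.mul_mem _ (Subring.mul_mem _ (Subring.mul_mem _ (Subring.mul_mem _ (Subring.mul_mem _ (Subring.mul_mem _ he m7) ?_) m5) m1) m2) m4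
    exact Subring.pow_mem _ (Subring.pow_mem _ m6 _) _
  · simp only [gg, div_eq_mul_inv, mul_inv]
    simp only [div_eq_mul_inv] at *
    generalize (1 - (RatFunc.X : RatFunc ℚ) ^ r * (RatFunc.X ^ (2 * (d : ℤ))) ^ k)⁻¹ = u at *
    generalize (qp ((RatFunc.X : RatFunc ℚ) ^ (2 * (d : ℤ))) (RatFunc.X ^ (2 * (d : ℤ))) k)⁻¹ = u1 at *
    generalize (qp (((RatFunc.X : RatFunc ℚ) ^ r)^2) (RatFunc.X ^ (2 * (d : ℤ))) k)⁻¹ = u2 at *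
    generalize (((RatFunc.X : RatFunc ℚ) ^ (2 * (d : ℤ))) ^ ((N+1).choose 2))⁻¹ = u3 at *
    generalize ((RatFunc.X : RatFunc ℚ) ^ (2 * (d : ℤ)) * ((RatFunc.X ^ r)^2)⁻¹) ^ k = u4 at *
    generalize (((RatFunc.X : RatFunc ℚ) ^ (n : ℤ))^2) ^ N = u5 at *
    generalize ((RatFunc.X : RatFunc ℚ) ^ (n : ℤ))^2 = u6 at *
    linear_combination -(-1)^N * u5 * u3 * u1 * u2 * u4 * hE

lemma core {n d N : ℕ} {r : ℤ} (hodd : Odd n) (hd : 0 < d) (hgcd : Nat.gcd n d = 1)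
    (hN : (d : ℤ) * N = n - r) (hN0 : 0 < N) (hNn : N < n)
    (h2 : ∀ j : ℕ, ((RatFunc.X : RatFunc ℚ) ^ r) ^ 2 * (RatFunc.X ^ (2 * (d : ℤ))) ^ j ≠ 1)
    (h4 : ∀ j : ℕ, (RatFunc.X : RatFunc ℚ) ^ r * (RatFunc.X ^ (2 * (d : ℤ))) ^ j ≠ 1)
    (p s y D : RatFunc ℚ) (hp : p = RatFunc.X ^ (2 * (d : ℤ))) (hs : s = RatFunc.X ^ r)
    (hy : y = RatFunc.X ^ (n : ℤ))
    (hD : D = (1 + s)⁻¹ * (∑ k ∈ range (N+1), cc p s s⁻¹ k * (qp (s^2) p k * qp (s^2) p k / (qp p p k * qp p p k)) -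
       ∑ k ∈ range (N+1), gg p s y N k * (qp (s^2) p k * qp (s^2) p k))) :
    ((cyclotomic n ℚ).comp (-X)) ^ 3 * (cyclotomic n ℚ) ^ 2 ∣ D.num := by
  have hpos : 0 < n := by omega
  have hζ := Complex.isPrimitiveRoot_exp n hpos.ne'
  set ζ := Complex.exp (2 * Real.pi * Complex.I / n) with hζd
  have hζ0 : ζ ≠ 0 := hζ.ne_zero hpos.ne'
  obtain ⟨c1, hc1⟩ : cyclotomic n ℚ ∣ X ^ n - 1 := cyclotomic.dvd_X_pow_sub_one n ℚ
  have hc2 : (X ^ n + 1 : ℚ[X]) = (cyclotomic n ℚ).comp (-X) * (-(c1.comp (-X))) := by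
    have := congrArg (fun P : ℚ[X] => P.comp (-X)) hc1
    simp only [mul_comp, sub_comp, pow_comp, X_comp, one_comp, hodd.neg_pow] at this
    linear_combination -this
  set Φ := cyclotomic n ℚ with hΦ
  set W := Φ.comp (-X) with hW
  set c2 : ℚ[X] := -(c1.comp (-X)) with hc2d
  have hy1 : y + 1 = aM W * aM c2 := by
    rw [hy, ← map_mul, ← hc2, zpow_natCast, map_add, map_pow, aM_X, map_one]
  have hy2 : y - 1 = aM Φ * aM c1 := by
    rw [hy, ← map_mul, ← hc1, zpow_natCast, map_sub, map_pow, aM_X, map_one]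
  have hd' : (d : ℤ) ≠ 0 := by exact_mod_cast hd.ne'
  have hy10 : y + 1 ≠ 0 := by
    intro h
    have : y ^ 2 = 1 := by linear_combination (y - 1) * h
    rw [hy, ← zpow_natCast, ← zpow_mul] at this
    exact X_zpow_ne _ (by push_cast; omega) this
  have hW0 : aM W ≠ 0 := by
    intro h; rw [h, zero_mul] at hy1; exact hy10 hy1
  have key := gg_mem hodd hgcd hN hNn hζ c2 W hc2 h4
  have key' : ∀ k, ∃ g : Rz ζ, k ≤ N → aM W * (g : RatFunc ℚ) = gg p s y N k := by
    intro k
    by_cases hk : k ≤ N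
    · obtain ⟨g, hg⟩ := key k hk
      exact ⟨g, fun _ => by rw [hp, hs, hy]; exact hg⟩
    · exact ⟨0, fun h => absurd h hk⟩
  choose g hg using key'
  have mX := X_zpow_mem ζ hζ0
  have half : aM (C (1/2)) * 2 = 1 := by
    have : (2 : RatFunc ℚ) = aM (C 2) := by simp
    rw [this, ← map_mul, ← C_mul]; norm_num
  obtain ⟨h, hh⟩ := main_abs (Rz ζ) N ⟨RatFunc.X ^ (d : ℤ), mX _⟩ ⟨RatFunc.X ^ (-(d : ℤ)), mX _⟩
    ⟨y, hy ▸ mX _⟩ ⟨RatFunc.X ^ (-(n : ℤ)), mX _⟩ ⟨aM W, poly_mem _ _⟩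
    (by
      apply Subtype.ext
      change RatFunc.X ^ (d : ℤ) * RatFunc.X ^ (-(d : ℤ)) = (1 : RatFunc ℚ)
      rw [← zpow_add₀ X_ne]; simp)
    (by
      apply Subtype.ext
      change y * RatFunc.X ^ (-(n : ℤ)) = (1 : RatFunc ℚ)
      rw [hy, ← zpow_add₀ X_ne]; simp)
    (by intro h; exact hW0 (congrArg Subtype.val h))
    (by
      apply IsUnit.of_mul_eq_one (⟨aM (C (1/2)), poly_mem _ _⟩ : Rz ζ)
      apply Subtype.ext
      change (2 : RatFunc ℚ) * aM (C (1/2)) = 1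
      rw [mul_comm]; exact half)
    ⟨⟨aM c2, poly_mem _ _⟩, by
      apply Subtype.ext
      change 1 + y = aM W * aM c2
      rw [← hy1, add_comm]⟩
    (by
      intro h
      have h' := congrArg Subtype.val h
      change y ^ 2 = (RatFunc.X ^ (-(n : ℤ))) ^ 2 at h'
      have : (RatFunc.X : RatFunc ℚ) ^ (4 * (n : ℤ)) = 1 := by
        have e : (RatFunc.X : RatFunc ℚ) ^ (4 * (n : ℤ)) = y ^ 2 * y ^ 2 := by
          rw [hy, ← zpow_natCast, ← zpow_mul, ← zpow_add₀ X_ne]; congr 1; push_cast; ring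
        rw [e]
        nth_rewrite 1 [h']
        rw [← mul_pow, hy, ← zpow_add₀ X_ne]; simp
      exact X_zpow_ne _ (by omega) this)
    g p s
    (by
      change p = (RatFunc.X ^ (d : ℤ)) ^ 2
      rw [hp, ← zpow_natCast, ← zpow_mul]; congr 1; push_cast; ring)
    (by
      change s = y * (RatFunc.X ^ (-(d : ℤ))) ^ N
      rw [hs, hy, ← zpow_natCast (RatFunc.X ^ (-(d : ℤ))), ← zpow_mul, ← zpow_add₀ X_ne]
      congr 1; linear_combination hN)
    (by
      intro j
      rw [hp, ← zpow_natCast, ← zpow_mul, ← zpow_add₀ X_ne]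
      apply X_zpow_ne
      have : 2 * (d : ℤ) + 2 * d * j = d * (2 * (j + 1)) := by ring
      rw [this]; exact mul_ne_zero hd' (by omega))
    (by rw [hp, hs]; exact h2) (by rw [hp, hs]; exact h4)
    (by
      intro j hj
      change p / y ^ 2 * p ^ j ≠ 1
      rw [hp, hy, ← zpow_natCast, ← zpow_natCast, ← zpow_mul, ← zpow_mul, ← zpow_sub₀ X_ne, ← zpow_add₀ X_ne]
      apply X_zpow_ne
      intro h
      have h5 : (n : ℤ) = d * (j + 1) := by push_cast at h; linarith
      have h6 := (zdiv hgcd hodd ((j : ℤ) + 1)).1 ⟨1, by rw [← h5]; ring⟩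
      exact small_ndvd _ (by omega) (by omega) (by omega) h6)
    (by
      intro j hj
      change p * y ^ 2 * p ^ j ≠ 1
      rw [hp, hy, ← zpow_natCast, ← zpow_natCast, ← zpow_mul, ← zpow_mul, ← zpow_add₀ X_ne, ← zpow_add₀ X_ne]
      apply X_zpow_ne
      have : 0 ≤ 2 * (d : ℤ) * j := by positivity
      push_cast
      omega)
    (fun k hk => hg k hk)
  change _ = aM W * (1 - y ^ 2) * (1 - (RatFunc.X ^ (-(n : ℤ))) ^ 2) * (h : RatFunc ℚ) at hh
  have m1 : (qp p p N)⁻¹ ∈ Rz ζ := by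
    rw [hp]
    apply qp_inv_mem hodd hζ
    intro j hj h
    rw [show 2 * (d : ℤ) + 2 * d * j = 2 * (d * (j + 1)) by ring] at h
    have h := (zdiv hgcd hodd _).1 ((zdiv hgcd hodd _).2 h)
    exact small_ndvd _ (by omega) (by omega) (by omega) h
  have n1 : qp p p N ≠ 0 := by
    apply qp_ne
    intro j _
    rw [hp, ← zpow_natCast, ← zpow_mul, ← zpow_add₀ X_ne]
    apply X_zpow_ne
    have : 2 * (d : ℤ) + 2 * d * j = d * (2 * (j + 1)) := by ring
    rw [this]; exact mul_ne_zero hd' (by omega)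
  have m2 : (1 + s)⁻¹ ∈ Rz ζ := by
    rw [hs]
    apply inv_mem2 hodd hζ
    intro h
    rw [show r = n - d * (N : ℤ) by linear_combination hN, dvd_sub_right (dvd_refl _)] at h
    have h := (zdiv hgcd hodd _).1 h
    exact small_ndvd _ (by omega) (by omega) (by omega) h
  have e1 : (1 - ((RatFunc.X : RatFunc ℚ) ^ (-(n : ℤ))) ^ 2) = (RatFunc.X ^ (-(n : ℤ))) ^ 2 * (y ^ 2 - 1) := by
    have : (RatFunc.X : RatFunc ℚ) ^ (-(n : ℤ)) * y = 1 := by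
      rw [hy, ← zpow_add₀ X_ne]; simp
    linear_combination -(RatFunc.X ^ (-(n : ℤ)) * y + 1) * this
  have e2 : y ^ 2 - 1 = aM W * aM Φ * (aM c1 * aM c2) := by
    linear_combination (y - 1) * hy1 + aM W * aM c2 * hy2
  have e3 : 1 - y ^ 2 = - (aM W * aM Φ * (aM c1 * aM c2)) := by
    linear_combination -e2
  rw [e1, e2, e3] at hh
  refine final_dvd hpos hζ D ((1 + s)⁻¹ * (qp p p N)⁻¹ * (qp p p N)⁻¹ *
    (-(aM c1 * aM c2) * (RatFunc.X ^ (-(n : ℤ))) ^ 2 * (aM c1 * aM c2) * (h : RatFunc ℚ))) ?_ ?_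
  · refine Subring.mul_mem _ (Subring.mul_mem _ (Subring.mul_mem _ m2 m1) m1) ?_
    have hcc : aM c1 * aM c2 ∈ Rz ζ := Subring.mul_mem _ (poly_mem _ _) (poly_mem _ _)
    exact Subring.mul_mem _ (Subring.mul_mem _ (Subring.mul_mem _ (Subring.neg_mem _ hcc)
      (Subring.pow_mem _ (mX _) _)) hcc) h.2
  · rw [hD, map_mul, map_pow, map_pow]
    set Z := (∑ k ∈ range (N+1), cc p s s⁻¹ k * (qp (s^2) p k * qp (s^2) p k / (qp p p k * qp p p k)) -
       ∑ k ∈ range (N+1), gg p s y N k * (qp (s^2) p k * qp (s^2) p k)) with hZ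
    have hZ' : Z = (qp p p N)⁻¹ * (qp p p N)⁻¹ * (qp p p N * qp p p N * Z) := by
      field_simp
    rw [hZ', hh]
    ring


theorem stmt3 (n d : ℕ) (r : ℤ) (hpos : 0 < n) (hodd : Odd n) (hd : 0 < d)
    (hgcd : Nat.gcd n d = 1)
    (hr1 : (n : ℤ) - d * n + d ≤ r) (hr2 : r ≤ (n : ℤ))
    (hnr : (n : ℤ) ≡ r [ZMOD (d : ℤ)]) :
    ((cyclotomic n ℚ).comp (-X)) ^ 3 * (cyclotomic n ℚ) ^ 2 ∣
      RatFunc.num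
        ((∑ k ∈ Finset.range ((((n : ℤ) - r) / d).toNat + 1),
            (-1 : RatFunc ℚ) ^ k *
              ((1 + RatFunc.X ^ (2 * (d : ℤ) * k + r)) *
                qPoch (RatFunc.X ^ (2 * r)) (RatFunc.X ^ (2 * (d : ℤ))) k ^ 2) /
              ((1 + RatFunc.X ^ r) *
                qPoch (RatFunc.X ^ (2 * (d : ℤ))) (RatFunc.X ^ (2 * (d : ℤ))) k ^ 2) *
              RatFunc.X ^ ((d : ℤ) * (k : ℤ) ^ 2 + (k : ℤ) * ((d : ℤ) - r))) -
          (-1 : RatFunc ℚ) ^ (((n : ℤ) - r) / d).toNat *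
            (qInt (RatFunc.X ^ (2 : ℤ)) (n : ℤ) / qInt (RatFunc.X ^ (2 : ℤ)) r) *
            RatFunc.X ^ (((n : ℤ) - r) * ((n : ℤ) + r - d) / d) *
            ∑ k ∈ Finset.range ((((n : ℤ) - r) / d).toNat + 1),
              qPoch (RatFunc.X ^ (2 * r)) (RatFunc.X ^ (2 * (d : ℤ))) k *
                qPoch (RatFunc.X ^ r) (RatFunc.X ^ (2 * (d : ℤ))) k /
                (qPoch (RatFunc.X ^ (2 * (d : ℤ))) (RatFunc.X ^ (2 * (d : ℤ))) k *
                  qPoch (RatFunc.X ^ (2 * (d : ℤ) + r)) (RatFunc.X ^ (2 * (d : ℤ))) k) *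
                RatFunc.X ^ (2 * (k : ℤ) * ((d : ℤ) - r))) := by
  obtain ⟨t, ht⟩ := hnr.symm.dvd
  have hd' : (d : ℤ) ≠ 0 := by exact_mod_cast hd.ne'
  have hdp : (0 : ℤ) < d := by exact_mod_cast hd
  have ht0 : 0 ≤ t := by
    by_contra h
    have : (d : ℤ) * t < 0 := mul_neg_of_pos_of_neg hdp (by omega)
    omega
  obtain ⟨N, rfl⟩ := Int.eq_ofNat_of_zero_le ht0
  have hNe : (((n : ℤ) - r) / d).toNat = N := by
    rw [ht, Int.mul_ediv_cancel_left _ hd']; simp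
  have hN : (d : ℤ) * N = n - r := ht.symm
  have hNn : N < n := by
    have : (d : ℤ) * N ≤ d * (n - 1) := by rw [hN]; linarith
    have := le_of_mul_le_mul_left this hdp
    omega
  have hr0 : ∀ m : ℕ, r + d * m ≠ 0 := by
    intro m h
    have h1 : (n : ℤ) = d * (N - m) := by linear_combination -hN + h
    have h2 : (d : ℤ) ∣ n := ⟨_, h1⟩
    have h3 : d ∣ n := by exact_mod_cast h2
    have h4 : d = 1 := by
      have := Nat.dvd_gcd h3 (dvd_refl d)
      rw [hgcd] at this
      exact Nat.dvd_one.1 this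
    subst h4
    push_cast at *
    omega
  have h2 : ∀ j : ℕ, ((RatFunc.X : RatFunc ℚ) ^ r) ^ 2 * (RatFunc.X ^ (2 * (d : ℤ))) ^ j ≠ 1 := by
    intro j
    rw [← zpow_natCast, ← zpow_natCast, ← zpow_mul, ← zpow_mul, ← zpow_add₀ X_ne]
    apply X_zpow_ne
    intro h
    apply hr0 j
    push_cast at h
    linarith
  have h4 : ∀ j : ℕ, (RatFunc.X : RatFunc ℚ) ^ r * (RatFunc.X ^ (2 * (d : ℤ))) ^ j ≠ 1 := by
    intro j
    rw [← zpow_natCast, ← zpow_mul, ← zpow_add₀ X_ne]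
    apply X_zpow_ne
    intro h
    apply hr0 (2 * j)
    push_cast
    linarith
  rw [hNe, Finset.mul_sum]
  simp only [match_term1, match_term2 n d _ N r hd hN h2 h4]
  rw [← Finset.mul_sum, ← Finset.mul_sum, ← mul_sub]
  rcases Nat.eq_zero_or_pos N with h0 | h0
  · subst h0
    have hrn : r = n := by simp at hN; omega
    have n0 := h4 0
    have n1 : 1 - (RatFunc.X : RatFunc ℚ) ^ (n : ℤ) ≠ 0 := by
      intro h; apply n0; rw [hrn]; linear_combination -h
    have e : (1 - ((RatFunc.X : RatFunc ℚ) ^ (n : ℤ)) ^ 2) / (1 - RatFunc.X ^ (n : ℤ)) = 1 + RatFunc.X ^ (n : ℤ) := by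
      rw [div_eq_iff n1]; ring
    convert dvd_zero _
    rw [RatFunc.num_eq_zero_iff]
    apply mul_eq_zero_of_right
    rw [hrn]
    rw [sub_eq_zero, Finset.sum_range_one, Finset.sum_range_one]
    simp only [cc, gg, qp, Finset.prod_range_zero, pow_zero, mul_one, one_mul, Nat.choose_zero_succ, div_one, zero_add, Nat.choose]
    exact e.symm
  · exact core hodd hd hgcd hN h0 hNn h2 h4 _ _ _ _ rfl rfl rfl rfl
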